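/- arXiv:2405.02531 — 2 statements merged into one kernel-verified Lean document; each statement's English description precedes it below -/
import Mathlib

section
/- Fix δ ≥ 0, a symbol a of order 0, and the bump β. There exists ε₀ > 0 such that for every ε ∈ (0, ε₀] and every η ∈ C_c^∞(ℝ) supported in [π−2ε, π+2ε] the following holds. With 𝐊^j_{r₁,r₂}(θ₁,θ₂,θ₂′) = 2^{−2j(3/2+δ)} b(2^j,|x−y|) b(2^j,|x−z|) e^{i 2^j(|x−y|−|x−z|)} 1_{[0,π]}(|θ₁−θ₂|) η(θ₁−θ₂) 1_{[0,π]}(|θ₁−θ₂′|) η(θ₁−θ₂′), where b(2^j,r) = β(r)(2^{−j}+r)^{−3/2−δ} a(2^j r), x = r₁(cos θ₁, sin θ₁), y = r₂(cos θ₂, sin θ₂), z = r₂(cos θ₂′, sin θ₂′), and (𝐓^j_{r₁,r₂} F)(θ₁) = ∫₀^{2π} ∫₀^{2π} 𝐊^j_{r₁,r₂}(θ₁,θ₂,θ₂′) F(θ₂,θ₂′) dθ₂ dθ₂′, there is a constant C (independent of j, r₂, F) such that for every F supported in [0,ε]² and every j ≥ 1, r₂ > 0: ( ∫₀^∞ ∫₀^{2π}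 |(𝐓^j_{r₁,r₂} F)(θ₁)|² dθ₁ r₁ dr₁ )^{1/2} ≤ C 2^{−2j(3/2+δ)} (1 + 2^j r₂³)^{−1/2} ‖F‖_{L²([0,2π]²)}. -/
open MeasureTheory Real Set
open scoped ENNReal NNReal

noncomputable section

/-- Distance between planar points with polar coordinates, as a function of
`r₁, r₂` and the angle difference. -/
def dG (r₁ r₂ θ : ℝ) : ℝ := Real.sqrt (r₁ ^ 2 + r₂ ^ 2 - 2 * r₁ * r₂ * Real.cos θ)

/-- A symbol of order `0` on `(0, ∞)`. -/
def IsSymbol0 (a : ℝ → ℂ) : Prop :=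
  ContDiffOn ℝ (⊤ : ℕ∞) a (Set.Ioi 0) ∧ (∃ M : ℝ, ∀ r > (0 : ℝ), ‖a r‖ ≤ M) ∧
    ∀ N : ℕ, ∃ C : ℝ, ∀ r > (0 : ℝ),
      ‖iteratedDerivWithin N a (Set.Ioi 0) r‖ ≤ C * r ^ (-(N : ℝ))

/-- `b(2^j, r) = β(r) (2^{-j} + r)^{-3/2-δ} a(2^j r)`. -/
def bfun (δ : ℝ) (a : ℝ → ℂ) (β : ℝ → ℝ) (j : ℕ) (r : ℝ) : ℂ :=
  ((β r : ℝ) : ℂ) * ((((2 : ℝ) ^ (-(j : ℝ)) + r) ^ (-(3 / 2 + δ)) : ℝ) : ℂ) *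
    a ((2 : ℝ) ^ (j : ℝ) * r)

/-- The bilinear kernel `𝐊^j_{r₁,r₂}(θ₁, θ₂, θ₂′)`. -/
def BK (δ : ℝ) (a : ℝ → ℂ) (β η : ℝ → ℝ) (j : ℕ) (r₁ r₂ θ₁ θ₂ θ₂' : ℝ) : ℂ :=
  (((2 : ℝ) ^ (-(2 * (j : ℝ)) * (3 / 2 + δ)) : ℝ) : ℂ) *
    bfun δ a β j (dG r₁ r₂ (θ₁ - θ₂)) * bfun δ a β j (dG r₁ r₂ (θ₁ - θ₂')) *
    Complex.exp (Complex.I * (((2 : ℝ) ^ (j : ℝ) *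
        (dG r₁ r₂ (θ₁ - θ₂) - dG r₁ r₂ (θ₁ - θ₂')) : ℝ) : ℂ)) *
    Set.indicator (Set.Icc (0 : ℝ) Real.pi) (fun _ => (1 : ℂ)) |θ₁ - θ₂| *
    ((η (θ₁ - θ₂) : ℝ) : ℂ) *
    Set.indicator (Set.Icc (0 : ℝ) Real.pi) (fun _ => (1 : ℂ)) |θ₁ - θ₂'| *
    ((η (θ₁ - θ₂') : ℝ) : ℂ)

/-- The bilinear operator `𝐓^j_{r₁,r₂}`. -/
def BT (δ : ℝ) (a : ℝ → ℂ) (β η : ℝ → ℝ) (j : ℕ) (r₁ r₂ : ℝ)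
    (F : ℝ → ℝ → ℂ) (θ₁ : ℝ) : ℂ :=
  ∫ θ₂ in Set.Icc (0 : ℝ) (2 * Real.pi),
    ∫ θ₂' in Set.Icc (0 : ℝ) (2 * Real.pi),
      BK δ a β η j r₁ r₂ θ₁ θ₂ θ₂' * F θ₂ θ₂'

/-!
For fixed radii the kernel is a product `κ₊(θ₁ - θ₂) κ₋(θ₁ - θ₂′)`, so `T F (θ₁)` is the integral
over `θ₂` of `κ₊(θ₁ - θ₂)` times the convolution of `κ₋` with `F(θ₂, ·)`. The first factor only
costs its supremum and Cauchy–Schwarz in `θ₂`. By Plancherel the convolution costs the supremum of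
`|𝓕 κ₋|`. Near the angle `π` the distance is comparable to `r₁ + r₂` and its second angular
derivative is at most `-c r₁ r₂`, so the second derivative test gives
`|𝓕 κ₋|² ≲ 1 / (1 + 2^j r₁ r₂)`; finally `r₁ / (1 + 2^j r₁ r₂) ≲ 1 / (1 + 2^j r₂³)` for bounded
radii. The powers of `2^{-j} + r` in the amplitude are harmless because `β` lives away from `0`.

No measurability of `F` is assumed, and the Bochner integrals in `BT` vanish where they do not make
sense; the lower Lebesgue integrals on both sides are therefore compared through measurable
envelopes.
-/

section Fourier

open Filter Topology
open scoped FourierTransform ContDiff Convolution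

section Plancherel

variable {E F : Type*} [NormedAddCommGroup E] [InnerProductSpace ℝ E] [FiniteDimensional ℝ E]
  [MeasurableSpace E] [BorelSpace E] [NormedAddCommGroup F] [InnerProductSpace ℂ F]

lemma continuous_fourier_of_integrable {f : E → F} (hf : Integrable f) : Continuous (𝓕 f) :=
  VectorFourier.fourierIntegral_continuous continuous_fourierChar continuous_inner hf

variable [CompleteSpace F]

lemma integral_fourier_smul_eq_of_integrable {g : E → ℂ} {f : E → F} (hg : Integrable g)
    (hf : Integrable f) : ∫ ξ, 𝓕 g ξ • f ξ = ∫ x, g x • 𝓕 f x := by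
  simpa using! VectorFourier.integral_fourierIntegral_smul_eq_flip (L := innerₗ E)
    continuous_fourierChar continuous_inner hg hf

lemma coeFn_fourier_toLp_ae_eq {f : E → F} (hf : Integrable f) (hf2 : MemLp f 2) :
    (𝓕 (hf2.toLp f) : Lp F 2 (volume : Measure E)) =ᵐ[volume] 𝓕 f := by
  -- Both sides define the same tempered distribution.
  refine ae_eq_of_integral_contDiff_smul_eq ((Lp.memLp _).locallyIntegrable (by norm_num))
    (continuous_fourier_of_integrable hf).locallyIntegrable fun g hg hgc => ?_
  have hgc' : HasCompactSupport (Complex.ofRealCLM ∘ g) := hgc.comp_left rfl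
  have hg' : ContDiff ℝ ∞ (Complex.ofRealCLM ∘ g) := by fun_prop
  let G : SchwartzMap E ℂ := hgc'.toSchwartzMap hg'
  have hG : ∀ x, G x = (g x : ℂ) := fun x => rfl
  calc ∫ x, g x • (𝓕 (hf2.toLp f) : Lp F 2 (volume : Measure E)) x
      = ∫ x, G x • (𝓕 (hf2.toLp f) : Lp F 2 (volume : Measure E)) x := by
        simp only [hG, Complex.coe_smul]
    _ = ∫ x, 𝓕 G x • hf2.toLp f x := by
        rw [← Lp.toTemperedDistribution_apply, ← Lp.fourier_toTemperedDistribution_eq,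
          TemperedDistribution.fourier_apply, Lp.toTemperedDistribution_apply]
    _ = ∫ x, 𝓕 G x • f x :=
        integral_congr_ae (hf2.coeFn_toLp.mono fun x hx => by simp only [hx])
    _ = ∫ x, G x • 𝓕 f x := integral_fourier_smul_eq_of_integrable G.integrable hf
    _ = ∫ x, g x • 𝓕 f x := by simp only [hG, Complex.coe_smul]

theorem eLpNorm_two_fourier_eq {f : E → F} (hf : Integrable f) (hf2 : MemLp f 2) :
    eLpNorm (𝓕 f) 2 volume = eLpNorm f 2 volume := by
  rw [← eLpNorm_congr_ae (coeFn_fourier_toLp_ae_eq hf hf2), ← Lp.enorm_def,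
    ← ofReal_norm, Lp.norm_fourier_eq, ofReal_norm, Lp.enorm_toLp]

theorem lintegral_enorm_sq_fourier_eq {f : E → F} (hf : Integrable f) (hf2 : MemLp f 2) :
    ∫⁻ ξ, ‖𝓕 f ξ‖ₑ ^ 2 = ∫⁻ x, ‖f x‖ₑ ^ 2 := by
  have h := eLpNorm_two_fourier_eq hf hf2
  rw [eLpNorm_eq_lintegral_rpow_enorm_toReal two_ne_zero ENNReal.ofNat_ne_top,
    eLpNorm_eq_lintegral_rpow_enorm_toReal two_ne_zero ENNReal.ofNat_ne_top] at h
  exact ENNReal.rpow_left_injective (by norm_num : (2 : ℝ)⁻¹ ≠ 0) (by simpa using h)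

end Plancherel

lemma memLp_two_of_integrable_of_bound {X E : Type*} [MeasurableSpace X] {μ : Measure X}
    [NormedAddCommGroup E] {f : X → E} (hf : Integrable f μ) {C : ℝ} (hC : ∀ x, ‖f x‖ ≤ C) :
    MemLp f 2 μ := by
  refine (memLp_two_iff_integrable_sq_norm hf.1).2 ((hf.norm.const_mul C).mono' (hf.1.norm.pow 2)
    (ae_of_all _ fun x => ?_))
  rw [norm_pow, norm_norm, sq]
  exact mul_le_mul_of_nonneg_right (hC x) (norm_nonneg _)

theorem lintegral_enorm_integral_mul_sub_sq_le {κ f : ℝ → ℂ} {M B : ℝ} (hκ : Integrable κ)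
    (hκM : ∀ x, ‖κ x‖ ≤ M) (hB : ∀ ξ, ‖𝓕 κ ξ‖ ≤ B) (hf : Integrable f) (hf2 : MemLp f 2) :
    ∫⁻ θ, ‖∫ y, κ (θ - y) * f y‖ₑ ^ 2 ≤
      ENNReal.ofReal (B ^ 2) * ∫⁻ y, ‖f y‖ₑ ^ 2 := by
  set u : ℝ → ℂ := f ⋆[ContinuousLinearMap.mul ℂ ℂ, volume] κ with hu
  have hu_eq : ∀ θ, ∫ y, κ (θ - y) * f y = u θ := fun θ => by
    simp only [hu, convolution_def, ContinuousLinearMap.mul_apply', mul_comm]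
  have hu_int : Integrable u := hf.integrable_convolution _ hκ
  have hu_bdd : ∀ θ, ‖u θ‖ ≤ ∫ y, M * ‖f y‖ := fun θ => by
    rw [← hu_eq]
    refine norm_integral_le_of_norm_le (hf.norm.const_mul M) (ae_of_all _ fun y => ?_)
    rw [norm_mul]
    exact mul_le_mul_of_nonneg_right (hκM _) (norm_nonneg _)
  have hB0 : 0 ≤ B := (norm_nonneg _).trans (hB 0)
  calc ∫⁻ θ, ‖∫ y, κ (θ - y) * f y‖ₑ ^ 2 = ∫⁻ ξ, ‖𝓕 u ξ‖ₑ ^ 2 := by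
        simp only [hu_eq]
        exact (lintegral_enorm_sq_fourier_eq hu_int
          (memLp_two_of_integrable_of_bound hu_int hu_bdd)).symm
    _ ≤ ∫⁻ ξ, ENNReal.ofReal (B ^ 2) * ‖𝓕 f ξ‖ₑ ^ 2 := by
        refine lintegral_mono fun ξ => ?_
        have hξ : ‖𝓕 u ξ‖ₑ ≤ ENNReal.ofReal B * ‖𝓕 f ξ‖ₑ := by
          rw [hu, fourier_mul_convolution_eq hf hκ, mul_comm, enorm_mul]
          gcongr
          exact (ofReal_norm _).symm.trans_le (ENNReal.ofReal_le_ofReal (hB ξ))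
        calc ‖𝓕 u ξ‖ₑ ^ 2 ≤ (ENNReal.ofReal B * ‖𝓕 f ξ‖ₑ) ^ 2 := by gcongr
          _ = _ := by rw [mul_pow, ENNReal.ofReal_pow hB0]
    _ = _ := by
        rw [lintegral_const_mul' _ _ ENNReal.ofReal_ne_top, lintegral_enorm_sq_fourier_eq hf hf2]

end Fourier

section VanDerCorput

variable {Φ Φ' Φ'' : ℝ → ℝ} {a b μ : ℝ}

lemma integral_deriv_div_sq_add_le (hab : a ≤ b) (hμ : 0 < μ)
    (hΦ' : ∀ x ∈ Icc a b, HasDerivAt Φ' (Φ'' x) x) (hΦ'' : ContinuousOn Φ'' (Icc a b)) :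
    ∫ x in a..b, Φ'' x / (Φ' x ^ 2 + μ) ≤ π / √μ := by
  have hderiv : ∀ x ∈ Icc a b,
      HasDerivAt (fun x => arctan (Φ' x / √μ) / √μ) (Φ'' x / (Φ' x ^ 2 + μ)) x := fun x hx => by
    refine (((hΦ' x hx).div_const √μ).arctan.div_const √μ).congr_deriv ?_
    have := sqrt_pos.2 hμ
    nth_rewrite 4 [← sq_sqrt hμ.le]
    field_simp
    ring
  have hcont : ContinuousOn (fun x => Φ'' x / (Φ' x ^ 2 + μ)) (Icc a b) :=
    hΦ''.div (((HasDerivAt.continuousOn hΦ').pow 2).add continuousOn_const)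
      fun x _ => by positivity
  rw [intervalIntegral.integral_eq_sub_of_hasDerivAt (fun x hx => hderiv x (uIcc_of_le hab ▸ hx))
    (hcont.intervalIntegrable_of_Icc hab), ← sub_div]
  gcongr
  linarith [arctan_lt_pi_div_two (Φ' b / √μ), neg_pi_div_two_lt_arctan (Φ' a / √μ)]

lemma abs_div_sq_add_le (hμ : 0 < μ) (y : ℝ) : |y / (y ^ 2 + μ)| ≤ 1 / (2 * √μ) := by
  have := sqrt_pos.2 hμ
  rw [abs_div, abs_of_pos (by positivity : 0 < y ^ 2 + μ),
    div_le_div_iff₀ (by positivity) (by positivity), ← sq_abs y]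
  nlinarith [sq_nonneg (|y| - √μ), sq_sqrt hμ.le]

/-- An approximate primitive `-i w e^{iΦ}` of `e^{iΦ}`: the weight `w = Φ' / (Φ'² + μ)` replaces
the weight `1 / Φ'` of the usual integration by parts, which is singular where `Φ'` vanishes. -/
def approxPrimitive (Φ Φ' : ℝ → ℝ) (μ x : ℝ) : ℂ :=
  ((Φ' x / (Φ' x ^ 2 + μ) : ℝ) : ℂ) * (-Complex.I * Complex.exp (Complex.I * Φ x))

lemma norm_approxPrimitive_le (hμ : 0 < μ) (x : ℝ) :
    ‖approxPrimitive Φ Φ' μ x‖ ≤ 1 / (2 * √μ) := by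
  simpa only [approxPrimitive, norm_mul, norm_neg, Complex.norm_I, Complex.norm_exp_I_mul_ofReal,
    mul_one, Complex.norm_real, norm_eq_abs] using abs_div_sq_add_le hμ (Φ' x)

lemma hasDerivAt_approxPrimitive (hμ : 0 < μ) {x : ℝ} (hΦ : HasDerivAt Φ (Φ' x) x)
    (hΦ' : HasDerivAt Φ' (Φ'' x) x) :
    HasDerivAt (approxPrimitive Φ Φ' μ) (Complex.exp (Complex.I * Φ x) *
      (1 - (((μ / (Φ' x ^ 2 + μ) : ℝ) : ℂ) +
        ((Φ'' x * (μ - Φ' x ^ 2) / (Φ' x ^ 2 + μ) ^ 2 : ℝ) : ℂ) * Complex.I))) x := by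
  have hpos : 0 < Φ' x ^ 2 + μ := by positivity
  have hweight : HasDerivAt (fun y => Φ' y / (Φ' y ^ 2 + μ))
      (Φ'' x * (μ - Φ' x ^ 2) / (Φ' x ^ 2 + μ) ^ 2) x :=
    (hΦ'.div ((hΦ'.fun_pow 2).add_const μ) hpos.ne').congr_deriv (by push_cast; ring)
  refine (hweight.ofReal_comp.mul
    ((hΦ.ofReal_comp.const_mul Complex.I).cexp.const_mul (-Complex.I))).congr_deriv ?_
  have hw : ((Φ' x / (Φ' x ^ 2 + μ) : ℝ) : ℂ) * Φ' x = 1 - ((μ / (Φ' x ^ 2 + μ) : ℝ) : ℂ) := by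
    rw [← Complex.ofReal_mul, ← Complex.ofReal_one, ← Complex.ofReal_sub]
    congr 1
    field_simp
    ring
  linear_combination Complex.exp (Complex.I * Φ x) * (hw -
    ((Φ' x / (Φ' x ^ 2 + μ) : ℝ) : ℂ) * Φ' x * Complex.I_sq)

lemma norm_error_approxPrimitive_le {p q : ℝ} (hμ : 0 < μ) (hq : μ ≤ q) :
    ‖((μ / (p ^ 2 + μ) : ℝ) : ℂ) + ((q * (μ - p ^ 2) / (p ^ 2 + μ) ^ 2 : ℝ) : ℂ) * Complex.I‖ ≤
      2 * (q / (p ^ 2 + μ)) := by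
  have hpos : 0 < p ^ 2 + μ := by positivity
  have hq0 : 0 < q := hμ.trans_le hq
  have hreal : |μ / (p ^ 2 + μ)| ≤ q / (p ^ 2 + μ) := by
    rw [abs_of_pos (by positivity)]
    gcongr
  have himag : |q * (μ - p ^ 2) / (p ^ 2 + μ) ^ 2| ≤ q / (p ^ 2 + μ) := by
    have : |μ - p ^ 2| ≤ p ^ 2 + μ := abs_le.2 ⟨by linarith, by linarith [sq_nonneg p]⟩
    calc |q * (μ - p ^ 2) / (p ^ 2 + μ) ^ 2| = q * |μ - p ^ 2| / (p ^ 2 + μ) ^ 2 := by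
          rw [abs_div, abs_mul, abs_of_pos hq0, abs_of_pos (pow_pos hpos 2)]
      _ ≤ q * (p ^ 2 + μ) / (p ^ 2 + μ) ^ 2 := by gcongr
      _ = q / (p ^ 2 + μ) := by field_simp
  refine (norm_add_le _ _).trans ?_
  rw [norm_mul, Complex.norm_I, mul_one, Complex.norm_real, Complex.norm_real]
  exact (add_le_add hreal himag).trans_eq (two_mul _).symm

lemma integral_mul_eq_sub_integral_deriv_mul_primitive {A A' e : ℝ → ℂ} (hab : a ≤ b)
    (hA : ∀ x ∈ Icc a b, HasDerivAt A (A' x) x) (hA' : ContinuousOn A' (Icc a b))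
    (he : ContinuousOn e (Icc a b)) :
    ∫ x in a..b, A x * e x =
      A b * (∫ t in a..b, e t) - ∫ x in a..b, A' x * ∫ t in a..x, e t := by
  rw [intervalIntegral.integral_mul_deriv_eq_deriv_mul_of_hasDerivAt
    (v := fun x => ∫ t in a..x, e t) (uIcc_of_le hab ▸ HasDerivAt.continuousOn hA) ?_
    (fun x hx => ?_) (fun x hx => ?_) (hA'.intervalIntegrable_of_Icc hab)
    (he.intervalIntegrable_of_Icc hab), intervalIntegral.integral_same, mul_zero, sub_zero]
  · exact intervalIntegral.continuousOn_primitive_interval (uIcc_of_le hab ▸ he.integrableOn_Icc)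
  · rw [min_eq_left hab, max_eq_right hab] at hx
    exact hA x (Ioo_subset_Icc_self hx)
  · rw [min_eq_left hab, max_eq_right hab] at hx
    exact intervalIntegral.integral_hasDerivAt_right
      ((he.mono (Icc_subset_Icc_right hx.2.le)).intervalIntegrable_of_Icc hx.1.le)
      ((he.mono Ioo_subset_Icc_self).stronglyMeasurableAtFilter isOpen_Ioo x hx)
      (he.continuousAt (Icc_mem_nhds hx.1 hx.2))

variable (hab : a ≤ b) (hμ : 0 < μ) (hΦ : ∀ x ∈ Icc a b, HasDerivAt Φ (Φ' x) x)
  (hΦ' : ∀ x ∈ Icc a b, HasDerivAt Φ' (Φ'' x) x) (hΦ'' : ContinuousOn Φ'' (Icc a b))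
  (hμΦ : ∀ x ∈ Icc a b, μ ≤ Φ'' x)

include hab hμ hΦ hΦ' hΦ'' hμΦ

theorem norm_integral_exp_le_of_le_deriv2 :
    ‖∫ x in a..b, Complex.exp (Complex.I * Φ x)‖ ≤ 8 / √μ := by
  set G := approxPrimitive Φ Φ' μ
  set D : ℝ → ℂ := fun x => ((μ / (Φ' x ^ 2 + μ) : ℝ) : ℂ) +
    ((Φ'' x * (μ - Φ' x ^ 2) / (Φ' x ^ 2 + μ) ^ 2 : ℝ) : ℂ) * Complex.I
  have hR : ∀ x, Φ' x ^ 2 + μ ≠ 0 := fun x => by positivity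
  have hΦc : ContinuousOn Φ (Icc a b) := HasDerivAt.continuousOn hΦ
  have hΦ'c : ContinuousOn Φ' (Icc a b) := HasDerivAt.continuousOn hΦ'
  have hDc : ContinuousOn D (Icc a b) := by fun_prop (disch := simp [hR])
  have hEc : ContinuousOn (fun x => Complex.exp (Complex.I * Φ x)) (Icc a b) := by fun_prop
  have hGi : IntervalIntegrable (fun x => Complex.exp (Complex.I * Φ x) * (1 - D x)) volume a b :=
    (hEc.mul (continuousOn_const.sub hDc)).intervalIntegrable_of_Icc hab
  have hDi : IntervalIntegrable (fun x => Complex.exp (Complex.I * Φ x) * D x) volume a b :=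
    (hEc.mul hDc).intervalIntegrable_of_Icc hab
  have hFTC : ∫ x in a..b, Complex.exp (Complex.I * Φ x) * (1 - D x) = G b - G a :=
    intervalIntegral.integral_eq_sub_of_hasDerivAt (fun x hx => hasDerivAt_approxPrimitive hμ
      (hΦ x (uIcc_of_le hab ▸ hx)) (hΦ' x (uIcc_of_le hab ▸ hx))) hGi
  have hsplit : ∫ x in a..b, Complex.exp (Complex.I * Φ x) =
      G b - G a + ∫ x in a..b, Complex.exp (Complex.I * Φ x) * D x := by
    rw [← hFTC, ← intervalIntegral.integral_add hGi hDi]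
    exact intervalIntegral.integral_congr fun x _ => by ring
  have herror : ‖∫ x in a..b, Complex.exp (Complex.I * Φ x) * D x‖ ≤ 2 * (π / √μ) := by
    refine (intervalIntegral.norm_integral_le_of_norm_le hab (ae_of_all _ fun x hx => ?_)
      (ContinuousOn.intervalIntegrable_of_Icc hab ?_)).trans
      ((intervalIntegral.integral_const_mul _ _).trans_le
        (mul_le_mul_of_nonneg_left (integral_deriv_div_sq_add_le hab hμ hΦ' hΦ'') zero_le_two))
    · rw [norm_mul, Complex.norm_exp_I_mul_ofReal, one_mul]
      exact norm_error_approxPrimitive_le hμ (hμΦ x (Ioc_subset_Icc_self hx))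
    · fun_prop (disch := simp [hR])
  calc ‖∫ x in a..b, Complex.exp (Complex.I * Φ x)‖
      ≤ 1 / (2 * √μ) + 1 / (2 * √μ) + 2 * (π / √μ) := by
        rw [hsplit]
        exact norm_add_le_of_le (norm_sub_le_of_le (norm_approxPrimitive_le hμ b)
          (norm_approxPrimitive_le hμ a)) herror
    _ = (1 + 2 * π) / √μ := by field_simp; ring
    _ ≤ 8 / √μ := by gcongr; linarith [pi_lt_d2]

theorem norm_integral_exp_mul_le_of_le_deriv2 {A A' : ℝ → ℂ} {M₀ M₁ : ℝ}
    (hA : ∀ x ∈ Icc a b, HasDerivAt A (A' x) x) (hA' : ContinuousOn A' (Icc a b))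
    (hM₀ : ∀ x ∈ Icc a b, ‖A x‖ ≤ M₀) (hM₁ : ∀ x ∈ Icc a b, ‖A' x‖ ≤ M₁) :
    ‖∫ x in a..b, Complex.exp (Complex.I * Φ x) * A x‖ ≤ 8 * (M₀ + M₁ * (b - a)) / √μ := by
  set e : ℝ → ℂ := fun x => Complex.exp (Complex.I * Φ x)
  have hec : ContinuousOn e (Icc a b) := by
    have := HasDerivAt.continuousOn hΦ
    fun_prop
  set J : ℝ → ℂ := fun x => ∫ t in a..x, e t
  have hJ_le : ∀ x ∈ Icc a b, ‖J x‖ ≤ 8 / √μ := fun x hx => by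
    have hsub : Icc a x ⊆ Icc a b := Icc_subset_Icc_right hx.2
    exact norm_integral_exp_le_of_le_deriv2 hx.1 hμ (fun t ht => hΦ t (hsub ht))
      (fun t ht => hΦ' t (hsub ht)) (hΦ''.mono hsub) fun t ht => hμΦ t (hsub ht)
  have hrest : ‖∫ x in a..b, A' x * J x‖ ≤ M₁ * (8 / √μ) * (b - a) := by
    rw [← abs_of_nonneg (sub_nonneg.2 hab)]
    refine intervalIntegral.norm_integral_le_of_norm_le_const fun x hx => ?_
    have hx' : x ∈ Icc a b := Ioc_subset_Icc_self (uIoc_of_le hab ▸ hx)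
    exact norm_mul_le_of_le (hM₁ x hx') (hJ_le x hx')
  calc ‖∫ x in a..b, e x * A x‖ = ‖A b * J b - ∫ x in a..b, A' x * J x‖ := by
        simp only [mul_comm (e _), J,
          integral_mul_eq_sub_integral_deriv_mul_primitive hab hA hA' hec]
    _ ≤ M₀ * (8 / √μ) + M₁ * (8 / √μ) * (b - a) :=
        norm_sub_le_of_le (norm_mul_le_of_le (hM₀ b (right_mem_Icc.2 hab))
          (hJ_le b (right_mem_Icc.2 hab))) hrest
    _ = 8 * (M₀ + M₁ * (b - a)) / √μ := by ring

end VanDerCorput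

section Envelope

open Filter Topology

variable {Θ X ι : Type*} [PseudoMetricSpace Θ]

/-- The upper envelope at `θ` of the samples `h i`, taken at the points `t i`: the limit superior
of `h i x` as `t i → θ`. -/
def limsupEnvelope (t : ι → Θ) (h : ι → X → ℝ≥0∞) (θ : Θ) (x : X) : ℝ≥0∞ :=
  limsup (fun i => h i x) (comap t (𝓝 θ))

lemma measurable_limsupEnvelope [Countable ι] [SecondCountableTopology Θ] [MeasurableSpace Θ]
    [OpensMeasurableSpace Θ] [MeasurableSpace X] {t : ι → Θ} {h : ι → X → ℝ≥0∞}
    (hh : ∀ i, Measurable (h i)) : Measurable (Function.uncurry (limsupEnvelope t h)) := by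
  have heq : Function.uncurry (limsupEnvelope t h) = fun z => ⨅ k : ℕ, ⨆ i,
      ⨆ _ : dist (t i) z.1 < 1 / ((k : ℝ) + 1), h i z.2 := by
    ext z
    simp only [Function.uncurry, limsupEnvelope,
      (Metric.nhds_basis_ball_inv_nat_succ.comap t).limsup_eq_iInf_iSup, iInf_true, mem_preimage,
      Metric.mem_ball]
  rw [heq]
  refine Measurable.iInf fun k => Measurable.iSup fun i => ?_
  have hset : MeasurableSet {z : Θ × X | dist (t i) z.1 < 1 / ((k : ℝ) + 1)} :=
    measurableSet_lt (by fun_prop) measurable_const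
  simp only [iSup_eq_if]
  exact Measurable.ite hset ((hh i).comp measurable_snd) measurable_const

lemma limsupEnvelope_le {t : ι → Θ} {h : ι → X → ℝ≥0∞} {x : X} {P : Θ → ℝ≥0∞} {θ : Θ}
    (hP : UpperSemicontinuousAt P θ) (hle : ∀ i, h i x ≤ P (t i)) :
    limsupEnvelope t h θ x ≤ P θ := by
  refine le_of_forall_gt_imp_ge_of_dense fun c hc => limsup_le_of_le (by isBoundedDefault) ?_
  filter_upwards [tendsto_comap.eventually (hP c hc)] with i hi
  exact (hle i).trans hi.le

lemma le_limsupEnvelope {t : ι → Θ} {h : ι → X → ℝ≥0∞} {u : ℕ → ι} {θ : Θ} {x : X} {c : ℝ≥0∞}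
    (ht : Tendsto (t ∘ u) atTop (𝓝 θ)) (hh : Tendsto (fun n => h (u n) x) atTop (𝓝 c)) :
    c ≤ limsupEnvelope t h θ x := by
  calc c = limsup (fun i => h i x) (map u atTop) := hh.limsup_eq.symm
    _ ≤ limsupEnvelope t h θ x := limsup_le_limsup_of_le (tendsto_comap_iff.2 ht)

variable {E : Type*} [MeasurableSpace X] {ν : Measure X} [NormedAddCommGroup E]

section

variable [SecondCountableTopology Θ] [MeasurableSpace Θ] [OpensMeasurableSpace Θ]
  [IsSeparable ν] [TopologicalSpace.SeparableSpace E]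

/-- The graph `θ ↦ q θ ∈ L¹(ν)` is separable, so the samples can be taken from a countable dense
part of it; `L¹` convergence of the samples gives a.e. convergence along a subsequence. -/
theorem exists_measurable_envelope (q : Θ → X → E) :
    ∃ (T : Set Θ) (p : Θ → X → ℝ≥0∞), T.Countable ∧ Measurable (Function.uncurry p) ∧
      (∀ θ, Integrable (q θ) ν → ∀ᵐ x ∂ν, ‖q θ x‖ₑ ≤ p θ x) ∧
      ∀ᵐ x ∂ν, ∀ P : Θ → ℝ≥0∞, UpperSemicontinuous P → (∀ θ ∈ T, ‖q θ x‖ₑ ≤ P θ) →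
        ∀ θ, p θ x ≤ P θ := by
  let graph : Set (Θ × Lp E 1 ν) := {z | ∃ hz : Integrable (q z.1) ν, z.2 = hz.toL1 (q z.1)}
  have : Fact ((1 : ℝ≥0∞) ≠ ∞) := ⟨ENNReal.one_ne_top⟩
  obtain ⟨S, hSgraph, hS, hdense⟩ :=
    (TopologicalSpace.IsSeparable.of_separableSpace graph).exists_countable_dense_subset
  have : Countable S := hS.to_subtype
  refine ⟨Prod.fst '' S, limsupEnvelope (fun i : S => i.1.1) fun i x => ‖(i.1.2 : X → E) x‖ₑ,
    hS.image _, measurable_limsupEnvelope fun i => (Lp.stronglyMeasurable i.1.2).enorm,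
    fun θ hθ => ?_, ?_⟩
  · obtain ⟨u, huS, hu⟩ := mem_closure_iff_seq_limit.1
      (hdense <| show (θ, hθ.toL1 (q θ)) ∈ graph from ⟨hθ, rfl⟩)
    have hu₁ : Tendsto (fun n => (u n).1) atTop (𝓝 θ) := (continuous_fst.tendsto _).comp hu
    have hu₂ : Tendsto (fun n => (u n).2) atTop (𝓝 (hθ.toL1 (q θ))) :=
      (continuous_snd.tendsto _).comp hu
    obtain ⟨ns, hns, hae⟩ := (tendstoInMeasure_of_tendsto_Lp hu₂).exists_seq_tendsto_ae
    filter_upwards [hae, hθ.coeFn_toL1] with x hx hqx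
    rw [hqx] at hx
    exact le_limsupEnvelope (ι := S) (u := fun n => ⟨u (ns n), huS (ns n)⟩)
      (hu₁.comp hns.tendsto_atTop) hx.enorm
  · have hrepr : ∀ᵐ x ∂ν, ∀ i : S, (i.1.2 : X → E) x = q i.1.1 x :=
      ae_all_iff.2 fun i => by
        obtain ⟨hi, heq⟩ := hSgraph i.2
        exact heq ▸ hi.coeFn_toL1
    filter_upwards [hrepr] with x hx P hP hle θ
    exact limsupEnvelope_le (hP θ) fun i => hx i ▸ hle _ (mem_image_of_mem _ i.2)

end

lemma sq_lintegral_le (ν : Measure X) {f : X → ℝ≥0∞} (hf : AEMeasurable f ν) :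
    (∫⁻ x, f x ∂ν) ^ 2 ≤ ν univ * ∫⁻ x, f x ^ 2 ∂ν := by
  have h := ENNReal.lintegral_mul_le_Lp_mul_Lq ν Real.HolderConjugate.two_two
    (f := fun _ => 1) (g := f) aemeasurable_const hf
  simp only [Pi.mul_apply, one_mul, ENNReal.rpow_two, one_pow, lintegral_one] at h
  calc (∫⁻ x, f x ∂ν) ^ 2 ≤ (ν univ ^ (1 / (2 : ℝ)) * (∫⁻ x, f x ^ 2 ∂ν) ^ (1 / (2 : ℝ))) ^ 2 := by
        gcongr
    _ = ν univ * ∫⁻ x, f x ^ 2 ∂ν := by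
        rw [mul_pow, ← ENNReal.rpow_mul_natCast, ← ENNReal.rpow_mul_natCast]
        norm_num

/-- Since `q` need not be jointly measurable, the bound is proved for its measurable envelope, which
stays below every upper semicontinuous majorant of `‖q θ x‖` on a countable set of `θ`. -/
theorem lintegral_enorm_integral_sq_le [SecondCountableTopology Θ] [MeasurableSpace Θ]
    [OpensMeasurableSpace Θ] [IsSeparable ν] [SFinite ν] [TopologicalSpace.SeparableSpace E]
    [NormedSpace ℝ E] {μ : Measure Θ} [SFinite μ] {q : Θ → X → E} {G : X → ℝ≥0∞}
    (hq : ∀ x (T : Set Θ), T.Countable → ∃ P : Θ → ℝ≥0∞, UpperSemicontinuous P ∧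
      (∀ θ ∈ T, ‖q θ x‖ₑ ≤ P θ) ∧ ∫⁻ θ, P θ ^ 2 ∂μ ≤ G x) :
    ∫⁻ θ, ‖∫ x, q θ x ∂ν‖ₑ ^ 2 ∂μ ≤ ν univ * ∫⁻ x, G x ∂ν := by
  obtain ⟨T, p, hT, hp, hqp, hpP⟩ := exists_measurable_envelope (ν := ν) q
  have hθ : ∀ θ, ‖∫ x, q θ x ∂ν‖ₑ ^ 2 ≤ ν univ * ∫⁻ x, p θ x ^ 2 ∂ν := fun θ => by
    by_cases hint : Integrable (q θ) ν
    · refine le_trans ?_ (sq_lintegral_le ν (hp.of_uncurry_left).aemeasurable)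
      gcongr
      exact (enorm_integral_le_lintegral_enorm _).trans (lintegral_mono_ae (hqp θ hint))
    · simp [integral_undef hint]
  have hx : ∀ᵐ x ∂ν, ∫⁻ θ, p θ x ^ 2 ∂μ ≤ G x := by
    filter_upwards [hpP] with x hpx
    obtain ⟨P, hPc, hP, hPG⟩ := hq x T hT
    refine le_trans (lintegral_mono fun θ => ?_) hPG
    gcongr
    exact hpx P hPc hP θ
  have hp2 : Measurable fun z : Θ × X => p z.1 z.2 ^ 2 := hp.pow_const 2
  calc ∫⁻ θ, ‖∫ x, q θ x ∂ν‖ₑ ^ 2 ∂μ ≤ ∫⁻ θ, ν univ * ∫⁻ x, p θ x ^ 2 ∂ν ∂μ := lintegral_mono hθ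
    _ = ν univ * ∫⁻ x, ∫⁻ θ, p θ x ^ 2 ∂μ ∂ν := by
        rw [lintegral_const_mul _ hp2.lintegral_prod_right',
          lintegral_lintegral_swap hp2.aemeasurable]
    _ ≤ ν univ * ∫⁻ x, G x ∂ν := by
        gcongr ν univ * ?_
        exact lintegral_mono_ae hx

end Envelope

section Slice

open Filter
open scoped FourierTransform

lemma aemeasurable_restrict_iUnion_support_of_mul {ι X : Type*} [Countable ι] [MeasurableSpace X]
    {μ : Measure X} {k : ι → X → ℂ} {f : X → ℂ} (hk : ∀ i, Measurable (k i))
    (hkf : ∀ i, AEMeasurable (fun x => k i x * f x) μ) :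
    AEMeasurable f (μ.restrict (⋃ i, Function.support (k i))) := by
  rw [aemeasurable_iUnion_iff]
  refine fun i => ((hk i).inv.aemeasurable.mul (hkf i).restrict).congr ?_
  filter_upwards [ae_restrict_mem (measurableSet_support (hk i))] with x hx
  exact inv_mul_cancel_left₀ hx (f x)

variable {κ : ℝ → ℂ} {M : ℝ}

lemma continuous_integral_mul_sub {g : ℝ → ℂ} (hκ : Measurable κ) (hκM : ∀ x, ‖κ x‖ ≤ M)
    (hκc : ∀ᵐ x, ContinuousAt κ x) (hg : Integrable g) :
    Continuous fun θ => ∫ y, κ (θ - y) * g y := by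
  refine continuous_iff_continuousAt.2 fun θ => continuousAt_of_dominated
    (bound := fun y => M * ‖g y‖) (.of_forall fun s => ?_)
    (.of_forall fun s => ae_of_all _ fun y => ?_) (hg.norm.const_mul M) ?_
  · exact (hκ.comp (measurable_const.sub measurable_id)).aestronglyMeasurable.mul hg.1
  · rw [norm_mul]
    exact mul_le_mul_of_nonneg_right (hκM _) (norm_nonneg _)
  · filter_upwards [(quasiMeasurePreserving_sub_left volume θ).ae hκc] with y hy
    exact (ContinuousAt.comp (f := fun s : ℝ => s - y) hy (by fun_prop)).mul continuousAt_const

variable {B : ℝ} {Y : Set ℝ}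

/-- `f` is measurable on the part `U` of `Y` seen by those `θ ∈ T` whose integral is not junk, and
the remaining part does not contribute. -/
lemma exists_memLp_two_integral_mul_sub_eq (hκ : Measurable κ) (hY : MeasurableSet Y)
    {T : Set ℝ} (hT : T.Countable) {f : ℝ → ℂ} (hf : ∫⁻ y in Y, ‖f y‖ₑ ^ 2 ≠ ∞) :
    ∃ g : ℝ → ℂ, MemLp g 2 ∧ Function.support g ⊆ Y ∧
      ∫⁻ y, ‖g y‖ₑ ^ 2 ≤ ∫⁻ y in Y, ‖f y‖ₑ ^ 2 ∧
      ∀ θ ∈ T, IntegrableOn (fun y => κ (θ - y) * f y) Y →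
        ∫ y in Y, κ (θ - y) * f y = ∫ y, κ (θ - y) * g y := by
  let good : Set ℝ := {θ ∈ T | IntegrableOn (fun y => κ (θ - y) * f y) Y}
  have : Countable good := (hT.mono (sep_subset _ _)).to_subtype
  let k : good → ℝ → ℂ := fun θ y => κ (θ - y)
  have hk : ∀ θ, Measurable (k θ) := fun θ => hκ.comp (measurable_const.sub measurable_id)
  let U : Set ℝ := ⋃ θ, Function.support (k θ)
  have hU : MeasurableSet U := .iUnion fun θ => measurableSet_support (hk θ)
  have hg : AEMeasurable (Y.indicator (U.indicator f)) := by
    rw [aemeasurable_indicator_iff hY, aemeasurable_indicator_iff hU]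
    exact aemeasurable_restrict_iUnion_support_of_mul hk fun θ => θ.2.2.1.aemeasurable
  have hgf : ∫⁻ y, ‖Y.indicator (U.indicator f) y‖ₑ ^ 2 ≤ ∫⁻ y in Y, ‖f y‖ₑ ^ 2 := by
    rw [← lintegral_indicator hY]
    refine lintegral_mono fun y => ?_
    by_cases hy : y ∈ Y
    · simp only [indicator_of_mem hy]
      gcongr
      exact enorm_indicator_le_enorm_self _ _
    · simp [hy]
  refine ⟨Y.indicator (U.indicator f), ⟨hg.aestronglyMeasurable, ?_⟩, support_indicator_subset,
    hgf, fun θ hθ hint => ?_⟩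
  · rw [eLpNorm_lt_top_iff_lintegral_rpow_enorm_lt_top two_ne_zero ENNReal.ofNat_ne_top]
    simpa using hgf.trans_lt hf.lt_top
  · rw [← integral_indicator hY]
    congr 1 with y
    by_cases hy : y ∈ Y
    · by_cases h0 : κ (θ - y) = 0
      · simp [h0]
      · have hyU : y ∈ U := mem_iUnion.2 ⟨⟨θ, hθ, hint⟩, h0⟩
        simp [hy, hyU]
    · simp [hy]

variable (hκ : Measurable κ) (hκi : Integrable κ) (hκM : ∀ x, ‖κ x‖ ≤ M)
  (hκc : ∀ᵐ x, ContinuousAt κ x) (hB0 : 0 < B) (hB : ∀ ξ, ‖𝓕 κ ξ‖ ≤ B) (hY : MeasurableSet Y)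
  (hYfin : volume Y ≠ ∞)

include hκ hκi hκM hκc hB0 hB hY hYfin

theorem exists_continuous_majorant_integral_mul_sub {T : Set ℝ} (hT : T.Countable) (f : ℝ → ℂ) :
    ∃ P : ℝ → ℝ≥0∞, Continuous P ∧ (∀ θ ∈ T, ‖∫ y in Y, κ (θ - y) * f y‖ₑ ≤ P θ) ∧
      ∫⁻ θ, P θ ^ 2 ≤ ENNReal.ofReal (B ^ 2) * ∫⁻ y in Y, ‖f y‖ₑ ^ 2 := by
  by_cases hf : ∫⁻ y in Y, ‖f y‖ₑ ^ 2 = ∞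
  · refine ⟨fun _ => ∞, continuous_const, fun _ _ => le_top, ?_⟩
    rw [hf, ENNReal.mul_top (ENNReal.ofReal_pos.2 (pow_pos hB0 2)).ne']
    exact le_top
  obtain ⟨g, hg2, hgY, hgf, hgeq⟩ := exists_memLp_two_integral_mul_sub_eq hκ hY hT hf
  have hg : Integrable g := by
    have : IsFiniteMeasure (volume.restrict Y) := ⟨by simpa using hYfin.lt_top⟩
    rw [← integrableOn_iff_integrable_of_support_subset hgY]
    exact (hg2.restrict Y).integrable one_le_two
  refine ⟨fun θ => ‖∫ y, κ (θ - y) * g y‖ₑ, (continuous_integral_mul_sub hκ hκM hκc hg).enorm,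
    fun θ hθ => ?_, (lintegral_enorm_integral_mul_sub_sq_le hκi hκM hB hg hg2).trans ?_⟩
  · by_cases hint : IntegrableOn (fun y => κ (θ - y) * f y) Y
    · rw [hgeq θ hθ hint]
    · simp [integral_undef hint]
  · gcongr

theorem lintegral_enorm_integral_mul_integral_sq_le {X : Type*} [MeasurableSpace X]
    {ν : Measure X} [SFinite ν] [IsSeparable ν] {κ₁ : ℝ → X → ℂ} {M₁ : ℝ}
    (hκ₁ : ∀ θ x, ‖κ₁ θ x‖ ≤ M₁) (f : X → ℝ → ℂ) :
    ∫⁻ θ, ‖∫ x, κ₁ θ x * (∫ y in Y, κ (θ - y) * f x y) ∂ν‖ₑ ^ 2 ≤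
      ν univ * (ENNReal.ofReal ((M₁ * B) ^ 2) * ∫⁻ x, (∫⁻ y in Y, ‖f x y‖ₑ ^ 2) ∂ν) := by
  rw [← lintegral_const_mul' _ _ ENNReal.ofReal_ne_top]
  refine lintegral_enorm_integral_sq_le fun x T hT => ?_
  obtain ⟨P, hPc, hP, hPB⟩ := exists_continuous_majorant_integral_mul_sub hκ hκi hκM hκc hB0 hB
    hY hYfin hT (f x)
  refine ⟨fun θ => ENNReal.ofReal M₁ * P θ,
    (ENNReal.continuous_const_mul ENNReal.ofReal_ne_top |>.comp hPc).upperSemicontinuous,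
    fun θ hθ => ?_, ?_⟩
  · rw [enorm_mul]
    exact mul_le_mul' ((ofReal_norm _).symm.trans_le (ENNReal.ofReal_le_ofReal (hκ₁ θ x))) (hP θ hθ)
  · have hM₁ : 0 ≤ M₁ := (norm_nonneg _).trans (hκ₁ 0 x)
    simp only [mul_pow]
    rw [lintegral_const_mul' _ _ (ENNReal.pow_ne_top ENNReal.ofReal_ne_top),
      ENNReal.ofReal_mul (by positivity), ENNReal.ofReal_pow hM₁, mul_assoc]
    gcongr

end Slice

section Distance

variable {r s c R φ : ℝ}

lemma continuous_dG (r s : ℝ) : Continuous (dG r s) := by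
  unfold dG
  fun_prop

lemma dG_comm (r s φ : ℝ) : dG r s φ = dG s r φ := by
  unfold dG
  ring_nf

lemma dG_le_add (hr : 0 ≤ r) (hs : 0 ≤ s) : dG r s φ ≤ r + s := by
  refine sqrt_le_iff.2 ⟨by positivity, ?_⟩
  nlinarith [mul_nonneg (mul_nonneg hr hs) (neg_le_iff_add_nonneg.1 (neg_one_le_cos φ))]

lemma le_dG_left (hr : 0 ≤ r) (hs : 0 ≤ s) (hφ : cos φ ≤ 0) : r ≤ dG r s φ := by
  refine le_sqrt_of_sq_le ?_
  nlinarith [mul_nonneg (mul_nonneg hr hs) (neg_nonneg.2 hφ)]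

lemma le_dG_right (hr : 0 ≤ r) (hs : 0 ≤ s) (hφ : cos φ ≤ 0) : s ≤ dG r s φ :=
  dG_comm r s φ ▸ le_dG_left hs hr hφ

lemma hasDerivAt_dG (h : 0 < dG r s φ) :
    HasDerivAt (dG r s) (r * s * sin φ / dG r s φ) φ := by
  have hsq : HasDerivAt (fun x => r ^ 2 + s ^ 2 - 2 * r * s * cos x)
      (-(2 * r * s * -sin φ)) φ := ((hasDerivAt_cos φ).const_mul _).const_sub _
  refine (hsq.sqrt (sqrt_pos.1 h).ne').congr_deriv ?_
  change -(2 * r * s * -sin φ) / (2 * dG r s φ) = _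
  field_simp

lemma hasDerivAt_deriv_dG (h : 0 < dG r s φ) :
    HasDerivAt (fun x => r * s * sin x / dG r s x)
      (r * s * cos φ / dG r s φ - (r * s * sin φ) ^ 2 / dG r s φ ^ 3) φ := by
  refine (((hasDerivAt_sin φ).const_mul (r * s)).div (hasDerivAt_dG h) h.ne').congr_deriv ?_
  field_simp

lemma abs_deriv_dG_le (hr : 0 < r) (hs : 0 < s) (hφ : cos φ ≤ 0) :
    |r * s * sin φ / dG r s φ| ≤ dG r s φ := by
  have hr_le := le_dG_left hr.le hs.le hφ
  have h := hr.trans_le hr_le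
  rw [abs_div, abs_of_pos h, div_le_iff₀ h, abs_mul, abs_of_pos (mul_pos hr hs)]
  calc r * s * |sin φ| ≤ r * s := mul_le_of_le_one_right (by positivity) (abs_sin_le_one φ)
    _ ≤ dG r s φ * dG r s φ := mul_le_mul hr_le (le_dG_right hr.le hs.le hφ) hs.le h.le

lemma le_neg_deriv2_dG (hr : 0 < r) (hs : 0 < s) (hrR : r ≤ R) (hsR : s ≤ R) (hc : 0 ≤ c)
    (hφ : cos φ ≤ -c) :
    c * (r * s) / (2 * R) ≤
      -(r * s * cos φ / dG r s φ - (r * s * sin φ) ^ 2 / dG r s φ ^ 3) := by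
  have h : 0 < dG r s φ := hr.trans_le (le_dG_left hr.le hs.le (by linarith))
  calc c * (r * s) / (2 * R) ≤ c * (r * s) / dG r s φ := by
        gcongr
        linarith [dG_le_add (φ := φ) hr.le hs.le]
    _ ≤ r * s * -cos φ / dG r s φ := by
        rw [mul_comm c]
        gcongr
        linarith
    _ ≤ r * s * -cos φ / dG r s φ + (r * s * sin φ) ^ 2 / dG r s φ ^ 3 :=
        le_add_of_nonneg_right (by positivity)
    _ = _ := by ring

end Distance

section Symbol

/-- Symbols of order `0` on `(0, ∞)` with one derivative, bounded by `M`: `b` is `C¹` there, and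
`b` and `r b'` are at most `M`. -/
structure IsC1Symbol (M : ℝ) (b : ℝ → ℂ) : Prop where
  contDiffOn : ContDiffOn ℝ 1 b (Ioi 0)
  norm_le : ∀ r > 0, ‖b r‖ ≤ M
  mul_norm_deriv_le : ∀ r > 0, r * ‖deriv b r‖ ≤ M

lemma IsSymbol0.exists_isC1Symbol {a : ℝ → ℂ} (ha : IsSymbol0 a) : ∃ M, IsC1Symbol M a := by
  obtain ⟨ha, ⟨M, hM⟩, hder⟩ := ha
  obtain ⟨C, hC⟩ := hder 1
  refine ⟨max M C, ha.of_le (by exact_mod_cast le_top),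
    fun r hr => (hM r hr).trans (le_max_left ..), fun r hr => le_trans ?_ (le_max_right ..)⟩
  have h := hC r hr
  rwa [iteratedDerivWithin_one, derivWithin_of_isOpen isOpen_Ioi hr, Nat.cast_one, rpow_neg_one,
    ← div_eq_mul_inv, le_div_iff₀' hr] at h

namespace IsC1Symbol

variable {M M₁ M₂ r : ℝ} {b b₁ b₂ : ℝ → ℂ}

lemma nonneg (hb : IsC1Symbol M b) : 0 ≤ M := (norm_nonneg _).trans (hb.norm_le 1 one_pos)

lemma hasDerivAt (hb : IsC1Symbol M b) (hr : 0 < r) : HasDerivAt b (deriv b r) r :=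
  ((hb.contDiffOn.differentiableOn one_ne_zero).differentiableAt (Ioi_mem_nhds hr)).hasDerivAt

lemma continuousOn_deriv (hb : IsC1Symbol M b) : ContinuousOn (deriv b) (Ioi 0) :=
  hb.contDiffOn.continuousOn_deriv_of_isOpen isOpen_Ioi le_rfl

lemma comp_mul_left (hb : IsC1Symbol M b) {L : ℝ} (hL : 0 < L) :
    IsC1Symbol M fun r => b (L * r) where
  contDiffOn := hb.contDiffOn.comp (by fun_prop) fun r hr => mul_pos hL hr
  norm_le r hr := hb.norm_le _ (mul_pos hL hr)
  mul_norm_deriv_le r hr := by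
    calc r * ‖deriv (fun r => b (L * r)) r‖ = L * r * ‖deriv b (L * r)‖ := by
          rw [deriv_comp_mul_left, norm_smul, Real.norm_of_nonneg hL.le]
          ring
      _ ≤ M := hb.mul_norm_deriv_le _ (mul_pos hL hr)

lemma mul (h₁ : IsC1Symbol M₁ b₁) (h₂ : IsC1Symbol M₂ b₂) :
    IsC1Symbol (2 * (M₁ * M₂)) fun r => b₁ r * b₂ r where
  contDiffOn := h₁.contDiffOn.mul h₂.contDiffOn
  norm_le r hr := by
    have := h₁.nonneg
    have := h₂.nonneg
    calc ‖b₁ r * b₂ r‖ ≤ M₁ * M₂ := norm_mul_le_of_le (h₁.norm_le r hr) (h₂.norm_le r hr)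
      _ ≤ 2 * (M₁ * M₂) := le_mul_of_one_le_left (by positivity) one_le_two
  mul_norm_deriv_le r hr := by
    have := h₁.nonneg
    rw [deriv_fun_mul (h₁.hasDerivAt hr).differentiableAt (h₂.hasDerivAt hr).differentiableAt]
    calc r * ‖deriv b₁ r * b₂ r + b₁ r * deriv b₂ r‖
        ≤ r * (‖deriv b₁ r‖ * ‖b₂ r‖ + ‖b₁ r‖ * ‖deriv b₂ r‖) := by
          gcongr
          exact (norm_add_le _ _).trans (by rw [norm_mul, norm_mul])
      _ = (r * ‖deriv b₁ r‖) * ‖b₂ r‖ + ‖b₁ r‖ * (r * ‖deriv b₂ r‖) := by ring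
      _ ≤ M₁ * M₂ + M₁ * M₂ := by
          gcongr
          exacts [h₁.mul_norm_deriv_le r hr, h₂.norm_le r hr, h₁.norm_le r hr,
            h₂.mul_norm_deriv_le r hr]
      _ = 2 * (M₁ * M₂) := by ring

end IsC1Symbol

variable {β : ℝ → ℝ} {ρ R : ℝ}

lemma isC1Symbol_of_support_subset {M : ℝ} {b : ℝ → ℂ} (hb : ContDiffOn ℝ 1 b (Ioi 0))
    (hM : 0 ≤ M) (hbs : Function.support b ⊆ Icc ρ R)
    (h₀ : ∀ r ∈ Icc ρ R, ‖b r‖ ≤ M) (h₁ : ∀ r ∈ Icc ρ R, r * ‖deriv b r‖ ≤ M) :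
    IsC1Symbol M b where
  contDiffOn := hb
  norm_le r _ := by
    by_cases hr : b r = 0
    · rwa [hr, norm_zero]
    · exact h₀ r (hbs hr)
  mul_norm_deriv_le r _ := by
    by_cases hr : deriv b r = 0
    · rwa [hr, norm_zero, mul_zero]
    · exact h₁ r (closure_minimal hbs isClosed_Icc (support_deriv_subset hr))

lemma hasDerivAt_mul_rpow_add (hβ : Differentiable ℝ β) {p r : ℝ} (hpr : 0 < p + r) (s : ℝ) :
    HasDerivAt (fun r => ((β r * (p + r) ^ s : ℝ) : ℂ))
      ((deriv β r * (p + r) ^ s + β r * (s * (p + r) ^ (s - 1)) : ℝ) : ℂ) r := by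
  have h := ((hasDerivAt_id r).const_add p).rpow_const (p := s) (Or.inl hpr.ne')
  simpa using ((hβ r).hasDerivAt.mul h).ofReal_comp

lemma exists_isC1Symbol_mul_rpow_add (hβ : ContDiff ℝ 1 β) (hρ : 0 < ρ)
    (hβs : Function.support β ⊆ Icc ρ R) (s : ℝ) :
    ∃ M, ∀ p ∈ Icc (0 : ℝ) 1, IsC1Symbol M fun r => ((β r * (p + r) ^ s : ℝ) : ℂ) := by
  let K : Set (ℝ × ℝ) := Icc 0 1 ×ˢ Icc ρ R
  have hK : IsCompact K := isCompact_Icc.prod isCompact_Icc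
  have hpos : ∀ p ∈ Icc (0 : ℝ) 1, ∀ r > 0, 0 < p + r := fun p hp r hr =>
    add_pos_of_nonneg_of_pos hp.1 hr
  have hpow : ∀ t : ℝ, ContinuousOn (fun z : ℝ × ℝ => (z.1 + z.2) ^ t) K := fun t =>
    (continuous_fst.add continuous_snd).continuousOn.rpow_const fun z hz =>
      Or.inl (hpos _ hz.1 _ (hρ.trans_le hz.2.1)).ne'
  have hβ₀ : ContinuousOn (fun z : ℝ × ℝ => β z.2) K :=
    (hβ.continuous.comp continuous_snd).continuousOn
  have hβ₁ : ContinuousOn (fun z : ℝ × ℝ => deriv β z.2) K :=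
    ((hβ.continuous_deriv le_rfl).comp continuous_snd).continuousOn
  obtain ⟨M₀, hM₀⟩ := hK.exists_bound_of_continuousOn (hβ₀.mul (hpow s))
  obtain ⟨M₁, hM₁⟩ := hK.exists_bound_of_continuousOn (f := fun z => z.2 *
    (deriv β z.2 * (z.1 + z.2) ^ s + β z.2 * (s * (z.1 + z.2) ^ (s - 1))))
    (continuousOn_snd.mul ((hβ₁.mul (hpow s)).add (hβ₀.mul (continuousOn_const.mul (hpow _)))))
  refine ⟨max 0 (max M₀ M₁), fun p hp => isC1Symbol_of_support_subset ?_ (le_max_left ..)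
    (fun r hr => hβs fun h0 => hr (by simp [h0])) (fun r hr => ?_) fun r hr => ?_⟩
  · refine Complex.ofRealCLM.contDiff.comp_contDiffOn (hβ.contDiffOn.mul fun r hr => ?_)
    exact (ContDiffAt.rpow_const_of_ne (by fun_prop) (hpos p hp r hr).ne').contDiffWithinAt
  · rw [Complex.norm_real]
    exact (hM₀ (p, r) ⟨hp, hr⟩).trans ((le_max_left ..).trans (le_max_right ..))
  · have hr0 := hρ.trans_le hr.1
    have h := hM₁ (p, r) ⟨hp, hr⟩
    rw [(hasDerivAt_mul_rpow_add (hβ.differentiable one_ne_zero) (hpos p hp r hr0) s).deriv,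
      Complex.norm_real]
    rw [norm_mul, Real.norm_of_nonneg hr0.le] at h
    exact h.trans ((le_max_right ..).trans (le_max_right ..))

lemma exists_isC1Symbol_bfun (δ : ℝ) {a : ℝ → ℂ} {M : ℝ} (ha : IsC1Symbol M a)
    (hβ : ContDiff ℝ 1 β) (hρ : 0 < ρ) (hβs : Function.support β ⊆ Icc ρ R) :
    ∃ M', ∀ j, IsC1Symbol M' (bfun δ a β j) := by
  obtain ⟨M₁, hM₁⟩ := exists_isC1Symbol_mul_rpow_add hβ hρ hβs (-(3 / 2 + δ))
  refine ⟨2 * (M₁ * M), fun j => ?_⟩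
  have hp : (2 : ℝ) ^ (-(j : ℝ)) ∈ Icc (0 : ℝ) 1 :=
    ⟨by positivity, rpow_le_one_of_one_le_of_nonpos one_le_two (by simp)⟩
  convert (hM₁ _ hp).mul (ha.comp_mul_left (rpow_pos_of_pos two_pos (j : ℝ))) using 2 with r
  simp [bfun]

end Symbol

section AngularFactor

open scoped FourierTransform

/-- One of the two factors of the kernel `BK`, as a function of the difference `φ` of the angles,
with amplitude `b` and signed frequency `L`. -/
def angularFactor (b : ℝ → ℂ) (η : ℝ → ℝ) (L r s φ : ℝ) : ℂ :=
  indicator (Icc 0 π) (fun _ => 1) |φ| *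
    (Complex.exp (Complex.I * ((L * dG r s φ : ℝ) : ℂ)) * (b (dG r s φ) * η φ))

variable {b : ℝ → ℂ} {η : ℝ → ℝ} {M E L R r s α φ : ℝ}

lemma angularFactor_eq_indicator (hα : 0 ≤ α) (hηα : Function.support η ⊆ Ici α) :
    angularFactor b η L r s = indicator (Icc α π) fun φ =>
      Complex.exp (Complex.I * ((L * dG r s φ : ℝ) : ℂ)) * (b (dG r s φ) * η φ) := by
  ext φ
  by_cases hη : η φ = 0
  · simp [angularFactor, hη, indicator_apply]
  · have hφ : α ≤ φ := hηα hη
    simp [angularFactor, indicator_apply, hφ, abs_of_nonneg (hα.trans hφ), hα.trans hφ]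

lemma le_div_sqrt_one_add {x y c t : ℝ} (ht : 0 < t) (hx : 0 ≤ x) (hy : x ≤ y)
    (hc : x ≤ c / √t) :
    x ≤ (y + c) / √(1 + t) := by
  rw [le_div_iff₀ (sqrt_pos.2 ht)] at hc
  rw [le_div_iff₀ (by positivity)]
  calc x * √(1 + t) ≤ x * (1 + √t) := by
        gcongr
        exact sqrt_le_iff.2 ⟨by positivity, by nlinarith [sq_sqrt ht.le, sqrt_nonneg t]⟩
    _ ≤ y + c := by linarith

lemma fourier_angularFactor (hα : 0 ≤ α) (hαπ : α ≤ π) (hηα : Function.support η ⊆ Ici α)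
    (L ξ : ℝ) :
    𝓕 (angularFactor b η L r s) ξ = ∫ φ in α..π, Complex.exp (Complex.I *
      ((L * dG r s φ - 2 * π * ξ * φ : ℝ) : ℂ)) * (b (dG r s φ) * η φ) := by
  rw [fourier_real_eq_integral_exp_smul, angularFactor_eq_indicator hα hηα,
    intervalIntegral.integral_of_le hαπ, ← integral_Icc_eq_integral_Ioc,
    ← integral_indicator measurableSet_Icc]
  congr 1 with φ
  by_cases hφ : φ ∈ Icc α π
  · simp only [indicator_of_mem hφ]
    rw [smul_eq_mul, ← mul_assoc, ← Complex.exp_add]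
    congr 2
    push_cast
    ring
  · simp only [indicator_of_notMem hφ, smul_zero]

lemma norm_amplitude_le (hb : IsC1Symbol M b) (hd : 0 < dG r s φ) (hE : |η φ| ≤ E) :
    ‖b (dG r s φ) * η φ‖ ≤ M * E :=
  norm_mul_le_of_le (hb.norm_le _ hd) (by rwa [Complex.norm_real])

lemma hasDerivAt_amplitude (hb : IsC1Symbol M b) (hη : Differentiable ℝ η) (hd : 0 < dG r s φ) :
    HasDerivAt (fun φ => b (dG r s φ) * η φ)
      ((r * s * sin φ / dG r s φ) • deriv b (dG r s φ) * η φ + b (dG r s φ) * (deriv η φ : ℝ)) φ :=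
  ((hb.hasDerivAt hd).scomp φ (hasDerivAt_dG hd)).mul (hη φ).hasDerivAt.ofReal_comp

lemma norm_deriv_amplitude_le (hb : IsC1Symbol M b) (hr : 0 < r) (hs : 0 < s) (hφ : cos φ ≤ 0)
    (hE : |η φ| ≤ E) (hE' : |deriv η φ| ≤ E) :
    ‖(r * s * sin φ / dG r s φ) • deriv b (dG r s φ) * η φ +
      b (dG r s φ) * (deriv η φ : ℝ)‖ ≤ 2 * (M * E) := by
  have hd : 0 < dG r s φ := hr.trans_le (le_dG_left hr.le hs.le hφ)
  have := hb.nonneg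
  have hchain : ‖(r * s * sin φ / dG r s φ) • deriv b (dG r s φ)‖ ≤ M := by
    rw [norm_smul]
    refine le_trans ?_ (hb.mul_norm_deriv_le _ hd)
    gcongr
    exact abs_deriv_dG_le hr hs hφ
  calc _ ≤ M * E + M * E := norm_add_le_of_le
        (norm_mul_le_of_le hchain (by rwa [Complex.norm_real]))
        (norm_mul_le_of_le (hb.norm_le _ hd) (by rwa [Complex.norm_real]))
    _ = 2 * (M * E) := by ring

lemma continuousOn_deriv_amplitude (hb : IsC1Symbol M b) (hη : ContDiff ℝ 1 η) {S : Set ℝ}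
    (hd : ∀ φ ∈ S, 0 < dG r s φ) :
    ContinuousOn (fun φ => (r * s * sin φ / dG r s φ) • deriv b (dG r s φ) * η φ +
      b (dG r s φ) * (deriv η φ : ℝ)) S := by
  have hdc : ContinuousOn (dG r s) S := (continuous_dG r s).continuousOn
  have hphase : ContinuousOn (fun φ => r * s * sin φ / dG r s φ) S :=
    fun φ hφ => (hasDerivAt_deriv_dG (hd φ hφ)).continuousAt.continuousWithinAt
  have hη' : Continuous (deriv η) := hη.continuous_deriv le_rfl
  exact ((hphase.smul (hb.continuousOn_deriv.comp hdc hd)).mul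
    (Complex.continuous_ofReal.comp hη.continuous).continuousOn).add
    ((hb.contDiffOn.continuousOn.comp hdc hd).mul
      (Complex.continuous_ofReal.comp hη').continuousOn)

variable (hα : π / 2 < α)

include hα in
lemma cos_nonpos_of_mem_Icc (hφ : φ ∈ Icc α π) : cos φ ≤ 0 :=
  cos_nonpos_of_pi_div_two_le_of_le (hα.le.trans hφ.1) (by linarith [hφ.2, pi_pos])

variable (hr : 0 < r) (hs : 0 < s)

include hα hr hs

lemma dG_pos_of_mem_Icc (hφ : φ ∈ Icc α π) : 0 < dG r s φ :=
  hr.trans_le (le_dG_left hr.le hs.le (cos_nonpos_of_mem_Icc hα hφ))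

lemma angularFactor_eq_zero (hηα : Function.support η ⊆ Ici α) (hbR : Function.support b ⊆ Iic R)
    (h : R < max r s) (L φ : ℝ) : angularFactor b η L r s φ = 0 := by
  rw [angularFactor_eq_indicator (by linarith [pi_pos]) hηα]
  refine indicator_apply_eq_zero.2 fun hφ => ?_
  have hcos := cos_nonpos_of_mem_Icc hα hφ
  have hb0 : b (dG r s φ) = 0 := by
    by_contra hne
    exact h.not_ge (max_le ((le_dG_left hr.le hs.le hcos).trans (hbR hne))
      ((le_dG_right hr.le hs.le hcos).trans (hbR hne)))
  simp [hb0]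

variable (hb : IsC1Symbol M b)

include hb

lemma continuousOn_exp_mul_amplitude (hη : Continuous η) (L : ℝ) :
    ContinuousOn (fun φ => Complex.exp (Complex.I * ((L * dG r s φ : ℝ) : ℂ)) *
      (b (dG r s φ) * η φ)) (Icc α π) := by
  have hd := continuous_dG r s
  refine ContinuousOn.mul (by fun_prop) (ContinuousOn.mul ?_ (by fun_prop))
  exact hb.contDiffOn.continuousOn.comp hd.continuousOn fun φ hφ => dG_pos_of_mem_Icc hα hr hs hφ

variable (hηα : Function.support η ⊆ Ici α)

include hηα

lemma measurable_angularFactor (hη : Continuous η) (L : ℝ) :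
    Measurable (angularFactor b η L r s) := by
  rw [angularFactor_eq_indicator (by linarith [pi_pos]) hηα, ← piecewise_eq_indicator]
  exact (continuousOn_exp_mul_amplitude hα hr hs hb hη L).measurable_piecewise continuousOn_const
    measurableSet_Icc

lemma integrable_angularFactor (hη : Continuous η) (L : ℝ) :
    Integrable (angularFactor b η L r s) := by
  rw [angularFactor_eq_indicator (by linarith [pi_pos]) hηα, integrable_indicator_iff
    measurableSet_Icc]
  exact (continuousOn_exp_mul_amplitude hα hr hs hb hη L).integrableOn_Icc

lemma ae_continuousAt_angularFactor (hη : Continuous η) (L : ℝ) :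
    ∀ᵐ φ, ContinuousAt (angularFactor b η L r s) φ := by
  rw [angularFactor_eq_indicator (by linarith [pi_pos]) hηα]
  filter_upwards [measure_eq_zero_iff_ae_notMem.1 ((convex_Icc α π).addHaar_frontier volume)]
    with φ hφ
  exact (continuousOn_exp_mul_amplitude hα hr hs hb hη L).mono interior_subset
    |>.continuousAt_indicator hφ

lemma norm_angularFactor_le (hE0 : 0 ≤ E) (hE : ∀ φ ∈ Icc α π, |η φ| ≤ E) (L φ : ℝ) :
    ‖angularFactor b η L r s φ‖ ≤ M * E := by
  rw [angularFactor_eq_indicator (by linarith [pi_pos]) hηα]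
  by_cases hφ : φ ∈ Icc α π
  · rw [indicator_of_mem hφ, norm_mul, Complex.norm_exp_I_mul_ofReal, one_mul]
    exact norm_amplitude_le hb (dG_pos_of_mem_Icc hα hr hs hφ) (hE φ hφ)
  · rw [indicator_of_notMem hφ, norm_zero]
    exact mul_nonneg hb.nonneg hE0

variable (hαπ : α ≤ π) (hE : ∀ φ ∈ Icc α π, |η φ| ≤ E)

include hαπ hE

lemma norm_fourier_angularFactor_le (L ξ : ℝ) :
    ‖𝓕 (angularFactor b η L r s) ξ‖ ≤ M * E * (π - α) := by
  rw [fourier_angularFactor (by linarith [pi_pos]) hαπ hηα, ← abs_of_nonneg (sub_nonneg.2 hαπ)]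
  refine intervalIntegral.norm_integral_le_of_norm_le_const fun φ hφ => ?_
  rw [uIoc_of_le hαπ] at hφ
  rw [norm_mul, Complex.norm_exp_I_mul_ofReal, one_mul]
  have hφ' := Ioc_subset_Icc_self hφ
  exact norm_amplitude_le hb (dG_pos_of_mem_Icc hα hr hs hφ') (hE φ hφ')

/-- The second derivative test: the phase `-L d - 2πξφ` has second derivative at least
`-L cos α (r s) / (2R)`. -/
lemma norm_fourier_angularFactor_neg_le_div_sqrt (hη : ContDiff ℝ 1 η)
    (hE' : ∀ φ ∈ Icc α π, |deriv η φ| ≤ E) (hL : 0 < L) (hrR : r ≤ R) (hsR : s ≤ R) (ξ : ℝ) :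
    ‖𝓕 (angularFactor b η (-L) r s) ξ‖ ≤
      8 * (M * E + 2 * (M * E) * (π - α)) / √(L * (-cos α * (r * s) / (2 * R))) := by
  have hd : ∀ φ ∈ Icc α π, 0 < dG r s φ := fun φ hφ => dG_pos_of_mem_Icc hα hr hs hφ
  have hcos : cos α < 0 := cos_neg_of_pi_div_two_lt_of_lt hα (by linarith [pi_pos])
  have hR : 0 < R := hr.trans_le hrR
  have hdc := continuous_dG r s
  rw [fourier_angularFactor (by linarith [pi_pos]) hαπ hηα]
  refine norm_integral_exp_mul_le_of_le_deriv2 hαπ ?_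
    (fun φ hφ => ((hasDerivAt_dG (hd φ hφ)).const_mul (-L)).sub
      ((hasDerivAt_id φ).const_mul (2 * π * ξ)))
    (fun φ hφ => ((hasDerivAt_deriv_dG (hd φ hφ)).const_mul (-L)).sub_const _) ?_
    (fun φ hφ => ?_) (fun φ hφ => hasDerivAt_amplitude hb (hη.differentiable one_ne_zero) (hd φ hφ))
    (continuousOn_deriv_amplitude hb hη hd)
    (fun φ hφ => norm_amplitude_le hb (hd φ hφ) (hE φ hφ))
    (fun φ hφ => norm_deriv_amplitude_le hb hr hs (cos_nonpos_of_mem_Icc hα hφ) (hE φ hφ)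
      (hE' φ hφ))
  · have := neg_pos.2 hcos
    positivity
  · refine continuousOn_const.mul (ContinuousOn.sub ?_ ?_)
    · exact ContinuousOn.div (by fun_prop) hdc.continuousOn fun φ hφ => (hd φ hφ).ne'
    · exact ContinuousOn.div (by fun_prop) (hdc.pow 3).continuousOn fun φ hφ =>
        (pow_pos (hd φ hφ) 3).ne'
  · have h := le_neg_deriv2_dG hr hs hrR hsR (neg_nonneg.2 hcos.le)
      ((cos_le_cos_of_nonneg_of_le_pi (by linarith [pi_pos]) hφ.2 hφ.1).trans_eq (neg_neg _).symm)
    linarith [mul_le_mul_of_nonneg_left h hL.le]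

omit hr hs hb hE in
lemma exists_forall_angularFactor_le (hM : 0 ≤ M) (R : ℝ) (hη : ContDiff ℝ 1 η) :
    ∃ K > 0, ∀ b, IsC1Symbol M b → ∀ L > 0, ∀ r ∈ Ioc 0 R, ∀ s ∈ Ioc 0 R,
      (∀ L' φ, ‖angularFactor b η L' r s φ‖ ≤ K) ∧
        ∀ ξ, ‖𝓕 (angularFactor b η (-L) r s) ξ‖ ≤ K / √(1 + L * (r * s)) := by
  obtain ⟨E₀, hE₀⟩ := isCompact_Icc.exists_bound_of_continuousOn (s := Icc α π)
    hη.continuous.continuousOn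
  obtain ⟨E₁, hE₁⟩ := isCompact_Icc.exists_bound_of_continuousOn (s := Icc α π)
    (hη.continuous_deriv le_rfl).continuousOn
  set E := max 0 (max E₀ E₁)
  have hE (φ : ℝ) (hφ : φ ∈ Icc α π) : |η φ| ≤ E :=
    (hE₀ φ hφ).trans ((le_max_left ..).trans (le_max_right ..))
  have hE' (φ : ℝ) (hφ : φ ∈ Icc α π) : |deriv η φ| ≤ E :=
    (hE₁ φ hφ).trans ((le_max_right ..).trans (le_max_right ..))
  have hE0 : 0 ≤ E := le_max_left ..
  have hcos : 0 < -cos α := neg_pos.2 (cos_neg_of_pi_div_two_lt_of_lt hα (by linarith [pi_pos]))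
  have : 0 ≤ π - α := sub_nonneg.2 hαπ
  set c := 8 * (M * E + 2 * (M * E) * (π - α)) / √(-cos α / (2 * R))
  have hc : 0 ≤ c := by positivity
  have hMπα : 0 ≤ M * E * (π - α) := by positivity
  refine ⟨1 + M * E + M * E * (π - α) + c, by positivity, fun b hb L hL r hr s hs =>
    ⟨fun L' φ => ?_, fun ξ => ?_⟩⟩
  · have h := norm_angularFactor_le hα hr.1 hs.1 hb hηα hE0 hE L' φ
    linarith
  have hR : 0 < R := hr.1.trans_le hr.2
  have ht : 0 < L * (r * s) := mul_pos hL (mul_pos hr.1 hs.1)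
  have htriv := norm_fourier_angularFactor_le hα hr.1 hs.1 hb hηα hαπ hE (-L) ξ
  have hvdc := norm_fourier_angularFactor_neg_le_div_sqrt hα hr.1 hs.1 hb hηα hαπ hE hη hE' hL
    hr.2 hs.2 ξ
  rw [show L * (-cos α * (r * s) / (2 * R)) = -cos α / (2 * R) * (L * (r * s)) by ring,
    sqrt_mul (by positivity), ← div_div] at hvdc
  refine (le_div_sqrt_one_add ht (norm_nonneg _) htriv hvdc).trans ?_
  gcongr
  linarith [mul_nonneg hM hE0]

end AngularFactor

section Kernel

open scoped FourierTransform

variable {δ : ℝ} {a : ℝ → ℂ} {β η : ℝ → ℝ} {M B K R r s α : ℝ} {j : ℕ}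

lemma BK_eq_mul (δ : ℝ) (a : ℝ → ℂ) (β η : ℝ → ℝ) (j : ℕ) (r s θ x y : ℝ) :
    BK δ a β η j r s θ x y = ((2 ^ (-(2 * (j : ℝ)) * (3 / 2 + δ)) : ℝ) : ℂ) *
      (angularFactor (bfun δ a β j) η (2 ^ (j : ℝ)) r s (θ - x) *
        angularFactor (bfun δ a β j) η (-2 ^ (j : ℝ)) r s (θ - y)) := by
  have hexp : Complex.exp (Complex.I * (((2 : ℝ) ^ (j : ℝ) *
      (dG r s (θ - x) - dG r s (θ - y)) : ℝ) : ℂ)) =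
      Complex.exp (Complex.I * ((2 ^ (j : ℝ) * dG r s (θ - x) : ℝ) : ℂ)) *
        Complex.exp (Complex.I * ((-2 ^ (j : ℝ) * dG r s (θ - y) : ℝ) : ℂ)) := by
    rw [← Complex.exp_add]
    push_cast
    ring_nf
  rw [BK, angularFactor, angularFactor, hexp]
  ring

lemma BT_eq_integral (δ : ℝ) (a : ℝ → ℂ) (β η : ℝ → ℝ) (j : ℕ) (r s : ℝ) (F : ℝ → ℝ → ℂ)
    (θ : ℝ) :
    BT δ a β η j r s F θ = ((2 ^ (-(2 * (j : ℝ)) * (3 / 2 + δ)) : ℝ) : ℂ) *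
      ∫ x in Icc 0 (2 * π), angularFactor (bfun δ a β j) η (2 ^ (j : ℝ)) r s (θ - x) *
        ∫ y in Icc 0 (2 * π), angularFactor (bfun δ a β j) η (-2 ^ (j : ℝ)) r s (θ - y) *
          F x y := by
  simp only [BT, BK_eq_mul, ← integral_const_mul, mul_assoc]

lemma lintegral_enorm_BT_sq_le (hα : π / 2 < α) (hηα : Function.support η ⊆ Ici α)
    (hη : Continuous η) (hr : 0 < r) (hs : 0 < s) (hb : IsC1Symbol M (bfun δ a β j))
    (hK : ∀ L φ, ‖angularFactor (bfun δ a β j) η L r s φ‖ ≤ K) (hB0 : 0 < B)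
    (hB : ∀ ξ, ‖𝓕 (angularFactor (bfun δ a β j) η (-2 ^ (j : ℝ)) r s) ξ‖ ≤ B)
    (F : ℝ → ℝ → ℂ) :
    ∫⁻ θ in Ico 0 (2 * π), ‖BT δ a β η j r s F θ‖ₑ ^ 2 ≤
      ENNReal.ofReal ((2 ^ (-(2 * (j : ℝ)) * (3 / 2 + δ)) : ℝ) ^ 2 * (2 * π) * (K * B) ^ 2) *
        ∫⁻ x in Icc 0 (2 * π), ∫⁻ y in Icc 0 (2 * π), ‖F x y‖ₑ ^ 2 := by
  set A : ℝ := 2 ^ (-(2 * (j : ℝ)) * (3 / 2 + δ))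
  have hA : 0 ≤ A := by positivity
  calc ∫⁻ θ in Ico 0 (2 * π), ‖BT δ a β η j r s F θ‖ₑ ^ 2
      ≤ ∫⁻ θ, ‖BT δ a β η j r s F θ‖ₑ ^ 2 := setLIntegral_le_lintegral ..
    _ = ENNReal.ofReal (A ^ 2) * ∫⁻ θ, ‖∫ x in Icc 0 (2 * π),
          angularFactor (bfun δ a β j) η (2 ^ (j : ℝ)) r s (θ - x) * ∫ y in Icc 0 (2 * π),
            angularFactor (bfun δ a β j) η (-2 ^ (j : ℝ)) r s (θ - y) * F x y‖ₑ ^ 2 := by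
        rw [← lintegral_const_mul' _ _ ENNReal.ofReal_ne_top]
        simp only [BT_eq_integral, enorm_mul, mul_pow, ENNReal.ofReal_pow hA]
        rw [← ofReal_norm, Complex.norm_of_nonneg hA]
    _ ≤ ENNReal.ofReal (A ^ 2) * (ENNReal.ofReal (2 * π) * (ENNReal.ofReal ((K * B) ^ 2) *
          ∫⁻ x in Icc 0 (2 * π), ∫⁻ y in Icc 0 (2 * π), ‖F x y‖ₑ ^ 2)) := by
        have h := lintegral_enorm_integral_mul_integral_sq_le
          (measurable_angularFactor hα hr hs hb hηα hη _)
          (integrable_angularFactor hα hr hs hb hηα hη _) (hK _)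
          (ae_continuousAt_angularFactor hα hr hs hb hηα hη _) hB0 hB measurableSet_Icc
          (Y := Icc 0 (2 * π)) measure_Icc_lt_top.ne (ν := volume.restrict (Icc 0 (2 * π)))
          (fun θ x => hK (2 ^ (j : ℝ)) (θ - x)) F
        rw [Measure.restrict_apply_univ, volume_Icc, sub_zero] at h
        gcongr
    _ = _ := by
        rw [ENNReal.ofReal_mul (p := A ^ 2 * (2 * π)) (by positivity),
          ENNReal.ofReal_mul (sq_nonneg A)]
        ring

lemma div_one_add_mul_le {L : ℝ} (hL : 0 ≤ L) (hr : r ∈ Ioc 0 R) (hs : s ∈ Ioc 0 R) :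
    r / (1 + L * (r * s)) ≤ (R + R ^ 2) / (1 + L * s ^ 3) := by
  obtain ⟨hr, hrR⟩ := hr
  obtain ⟨hs, hsR⟩ := hs
  have hLrs : 0 ≤ L * (r * s) := by positivity
  rw [div_le_div_iff₀ (by positivity) (by positivity)]
  calc r * (1 + L * s ^ 3) = r + s ^ 2 * (L * (r * s)) := by ring
    _ ≤ R + R ^ 2 * (L * (r * s)) := by gcongr
    _ ≤ (R + R ^ 2) * (1 + L * (r * s)) := by nlinarith [mul_nonneg (hr.le.trans hrR) hLrs]

lemma support_bfun_subset (δ : ℝ) (a : ℝ → ℂ) (β : ℝ → ℝ) (j : ℕ) :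
    Function.support (bfun δ a β j) ⊆ Function.support β := fun r hr h0 => hr (by simp [bfun, h0])

lemma exists_lintegral_enorm_BT_sq_mul_le (δ : ℝ) (ha : IsC1Symbol M a) {ρ : ℝ}
    (hβ : ContDiff ℝ 1 β) (hρ : 0 < ρ) (hβs : Function.support β ⊆ Icc ρ R)
    (hη : ContDiff ℝ 1 η) (hα : α ∈ Ioc (π / 2) π) (hηα : Function.support η ⊆ Ici α) :
    ∃ C ≥ 0, ∀ (j : ℕ) (r s : ℝ), 0 < r → 0 < s → ∀ F : ℝ → ℝ → ℂ,
      (∫⁻ θ in Ico 0 (2 * π), ‖BT δ a β η j r s F θ‖ₑ ^ 2) * ENNReal.ofReal r ≤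
        (Iic R).indicator (fun _ => ENNReal.ofReal
          (C * (2 ^ (-(2 * (j : ℝ)) * (3 / 2 + δ)) : ℝ) ^ 2 / (1 + 2 ^ (j : ℝ) * s ^ 3)) *
            ∫⁻ x in Icc 0 (2 * π), ∫⁻ y in Icc 0 (2 * π), ‖F x y‖ₑ ^ 2) r := by
  obtain ⟨M', hb⟩ := exists_isC1Symbol_bfun δ ha hβ hρ hβs
  obtain ⟨K, hK0, hK⟩ := exists_forall_angularFactor_le hα.1 hηα hα.2 (hb 0).nonneg R hη
  refine ⟨2 * π * K ^ 4 * (|R| + R ^ 2), by positivity, fun j r s hr hs F => ?_⟩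
  set A : ℝ := 2 ^ (-(2 * (j : ℝ)) * (3 / 2 + δ))
  set L : ℝ := 2 ^ (j : ℝ)
  have hL : 0 < L := by positivity
  rcases lt_or_ge R (max r s) with hR | hR
  · have hbR : Function.support (bfun δ a β j) ⊆ Iic R :=
      (support_bfun_subset δ a β j).trans (hβs.trans Icc_subset_Iic_self)
    have hBT (θ : ℝ) : BT δ a β η j r s F θ = 0 := by
      simp [BT_eq_integral, angularFactor_eq_zero hα.1 hr hs hηα hbR hR]
    simp [hBT]
  have hr' : r ∈ Ioc 0 R := ⟨hr, (le_max_left ..).trans hR⟩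
  have hs' : s ∈ Ioc 0 R := ⟨hs, (le_max_right ..).trans hR⟩
  obtain ⟨hsup, hfourier⟩ := hK _ (hb j) L hL r hr' s hs'
  rw [indicator_of_mem (mem_Iic.2 hr'.2)]
  refine (mul_le_mul_left (lintegral_enorm_BT_sq_le hα.1 hηα hη.continuous hr hs (hb j) hsup
    (by positivity) hfourier F) _).trans ?_
  rw [mul_right_comm, ← ENNReal.ofReal_mul (by positivity)]
  gcongr
  calc A ^ 2 * (2 * π) * (K * (K / √(1 + L * (r * s)))) ^ 2 * r
      = 2 * π * K ^ 4 * A ^ 2 * (r / (1 + L * (r * s))) := by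
        rw [mul_pow, div_pow, sq_sqrt (by positivity)]
        ring
    _ ≤ 2 * π * K ^ 4 * A ^ 2 * ((|R| + R ^ 2) / (1 + L * s ^ 3)) := by
        refine mul_le_mul_of_nonneg_left ?_ (by positivity)
        refine (div_one_add_mul_le hL.le hr' hs').trans ?_
        gcongr
        exact le_abs_self R
    _ = 2 * π * K ^ 4 * (|R| + R ^ 2) * A ^ 2 / (1 + L * s ^ 3) := by ring

end Kernel

lemma rpow_half_ofReal_mul {C A P : ℝ} (hC : 0 ≤ C) (hA : 0 ≤ A) (hP : 0 ≤ P) (N : ℝ≥0∞) :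
    (ENNReal.ofReal (C * A ^ 2 / P) * N) ^ (1 / 2 : ℝ) =
      ENNReal.ofReal √C * ENNReal.ofReal A * ENNReal.ofReal (P ^ (-1 / 2 : ℝ)) *
        N ^ (1 / 2 : ℝ) := by
  rw [ENNReal.mul_rpow_of_nonneg _ _ (by positivity),
    ENNReal.ofReal_rpow_of_nonneg (by positivity) (by positivity), ← sqrt_eq_rpow,
    sqrt_div (by positivity), sqrt_mul hC, sqrt_sq hA, ← ENNReal.ofReal_mul (by positivity),
    ← ENNReal.ofReal_mul (by positivity), neg_div, rpow_neg hP, ← sqrt_eq_rpow, div_eq_mul_inv]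

theorem stmt4_general (δ : ℝ) {a : ℝ → ℂ} {M : ℝ} (ha : IsC1Symbol M a) {β : ℝ → ℝ} {ρ R : ℝ}
    (hβ : ContDiff ℝ 1 β) (hρ : 0 < ρ) (hβs : Function.support β ⊆ Icc ρ R) {η : ℝ → ℝ} {α : ℝ}
    (hη : ContDiff ℝ 1 η) (hα : α ∈ Ioc (π / 2) π) (hηα : Function.support η ⊆ Ici α) :
    ∃ C : ℝ≥0, ∀ (j : ℕ) (r₂ : ℝ), 0 < r₂ → ∀ F : ℝ → ℝ → ℂ,
      (∫⁻ r₁ in Ioi 0, (∫⁻ θ₁ in Ico 0 (2 * π), ‖BT δ a β η j r₁ r₂ F θ₁‖ₑ ^ 2) *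
          ENNReal.ofReal r₁) ^ (1 / 2 : ℝ) ≤
        C * ENNReal.ofReal (2 ^ (-(2 * (j : ℝ)) * (3 / 2 + δ))) *
          ENNReal.ofReal ((1 + 2 ^ (j : ℝ) * r₂ ^ 3) ^ (-1 / 2 : ℝ)) *
          (∫⁻ θ₂ in Icc 0 (2 * π), ∫⁻ θ₂' in Icc 0 (2 * π), ‖F θ₂ θ₂'‖ₑ ^ 2) ^ (1 / 2 : ℝ) := by
  obtain ⟨C, hC0, hC⟩ := exists_lintegral_enorm_BT_sq_mul_le δ ha hβ hρ hβs hη hα hηα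
  refine ⟨(√(C * |R|)).toNNReal, fun j r₂ hr₂ F => ?_⟩
  rw [← ENNReal.ofReal, ← rpow_half_ofReal_mul (by positivity) (by positivity) (by positivity)]
  gcongr
  calc _ ≤ ∫⁻ r₁ in Ioi 0, (Iic R).indicator (fun _ => _) r₁ :=
        setLIntegral_mono' measurableSet_Ioi fun r₁ hr₁ => hC j r₁ r₂ hr₁ hr₂ F
    _ = _ * ENNReal.ofReal R := by
        rw [lintegral_indicator_const measurableSet_Iic, Measure.restrict_apply measurableSet_Iic,
          inter_comm, Ioi_inter_Iic, volume_Ioc, sub_zero]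
    _ ≤ _ := by
        rw [mul_right_comm, ← ENNReal.ofReal_mul (by positivity), mul_right_comm C,
          div_mul_eq_mul_div]
        gcongr
        exact le_abs_self R

theorem stmt4 (δ : ℝ) (hδ : 0 ≤ δ) (a : ℝ → ℂ) (ha : IsSymbol0 a)
    (β : ℝ → ℝ) (hβ : ContDiff ℝ (⊤ : ℕ∞) β)
    (hβs : Function.support β ⊆ Set.Icc (3 / 8) (4 / 3)) :
    ∃ ε₀ : ℝ, 0 < ε₀ ∧ ∀ ε : ℝ, 0 < ε → ε ≤ ε₀ →
      ∀ η : ℝ → ℝ, ContDiff ℝ (⊤ : ℕ∞) η →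
        Function.support η ⊆ Set.Icc (Real.pi - 2 * ε) (Real.pi + 2 * ε) →
        ∃ C : ℝ≥0, ∀ (j : ℕ), 1 ≤ j → ∀ r₂ : ℝ, 0 < r₂ → ∀ F : ℝ → ℝ → ℂ,
          (∀ θ θ', F θ θ' ≠ 0 → θ ∈ Set.Icc (0 : ℝ) ε ∧ θ' ∈ Set.Icc (0 : ℝ) ε) →
          (∫⁻ r₁ in Set.Ioi (0 : ℝ),
              (∫⁻ θ₁ in Set.Ico (0 : ℝ) (2 * Real.pi),
                (‖BT δ a β η j r₁ r₂ F θ₁‖₊ : ℝ≥0∞) ^ (2 : ℝ)) *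
                ENNReal.ofReal r₁) ^ ((1 : ℝ) / 2) ≤
            (C : ℝ≥0∞) * ENNReal.ofReal ((2 : ℝ) ^ (-(2 * (j : ℝ)) * (3 / 2 + δ))) *
              ENNReal.ofReal ((1 + (2 : ℝ) ^ (j : ℝ) * r₂ ^ 3) ^ (-(1 : ℝ) / 2)) *
              (∫⁻ θ₂ in Set.Icc (0 : ℝ) (2 * Real.pi),
                ∫⁻ θ₂' in Set.Icc (0 : ℝ) (2 * Real.pi),
                  (‖F θ₂ θ₂'‖₊ : ℝ≥0∞) ^ (2 : ℝ)) ^ ((1 : ℝ) / 2) := by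
  refine ⟨1 / 2, by norm_num, fun ε hε hε2 η hη hηs => ?_⟩
  obtain ⟨M, hM⟩ := ha.exists_isC1Symbol
  obtain ⟨C, hC⟩ := stmt4_general δ hM (hβ.of_le (by exact_mod_cast le_top)) (by norm_num) hβs
    (hη.of_le (by exact_mod_cast le_top)) ⟨by linarith [pi_gt_three], by linarith⟩
    (hηs.trans Icc_subset_Ici_self)
  exact ⟨C, fun j _ r₂ hr₂ F _ => by
    simpa only [ENNReal.rpow_two, enorm_eq_nnnorm] using hC j r₂ hr₂ F⟩

end
end

section
/- Fix δ ≥ 0, a symbol a of order 0, the bump β, and α ∈ (−1,1)∖{0}. For j ≥ 1, r₁, r₂ > 0 and θ₁, θ₂ ∈ [0,2π) set ψ₁(s) = (2^{−j}+d_s)^{−3/2−δ} a(2^j d_s) e^{−|α|s} and ψ₂(s) = (2^{−j}+d_s)^{−3/2−δ} a(2^j d_s) · [(e^{−s} − cos(θ₁−θ₂+π)) sinh(αs)] / [cosh s − cos(θ₁−θ₂+π)], and define K̃^{ℓ,j}(r₁,r₂;θ₁−θ₂) = 2^{−j(3/2+δ)} β(r₁+r₂) ∫₀^∞ e^{i 2^j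 d_s} ψ_ℓ(s) ds for ℓ = 1, 2. Then there is a constant C, independent of j, r₁, r₂, θ₁, θ₂, such that |K̃^{1,j}(r₁,r₂;θ₁−θ₂)| + |K̃^{2,j}(r₁,r₂;θ₁−θ₂)| ≤ C 2^{−j(3/2+δ)} (1 + 2^j r₁ r₂)^{−1/2} for all j ≥ 1. -/
open MeasureTheory Real Set

noncomputable section

/-- `d_s(r₁, r₂) = √(r₁² + r₂² + 2 r₁ r₂ cosh s)`. -/
def dS (r₁ r₂ s : ℝ) : ℝ := Real.sqrt (r₁ ^ 2 + r₂ ^ 2 + 2 * r₁ * r₂ * Real.cosh s)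

/-- `ψ₁(s) = (2^{-j}+d_s)^{-3/2-δ} a(2^j d_s) e^{-|α|s}`. -/
def psi1 (δ α : ℝ) (a : ℝ → ℂ) (j : ℕ) (r₁ r₂ s : ℝ) : ℂ :=
  ((((2 : ℝ) ^ (-(j : ℝ)) + dS r₁ r₂ s) ^ (-(3 / 2 + δ)) : ℝ) : ℂ) *
    a ((2 : ℝ) ^ (j : ℝ) * dS r₁ r₂ s) * ((Real.exp (-(|α|) * s) : ℝ) : ℂ)

/-- `ψ₂(s)`, with `φ = θ₁ - θ₂`. -/
def psi2 (δ α : ℝ) (a : ℝ → ℂ) (j : ℕ) (r₁ r₂ φ s : ℝ) : ℂ :=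
  ((((2 : ℝ) ^ (-(j : ℝ)) + dS r₁ r₂ s) ^ (-(3 / 2 + δ)) : ℝ) : ℂ) *
    a ((2 : ℝ) ^ (j : ℝ) * dS r₁ r₂ s) *
    ((((Real.exp (-s) - Real.cos (φ + Real.pi)) * Real.sinh (α * s)) /
        (Real.cosh s - Real.cos (φ + Real.pi)) : ℝ) : ℂ)

/-- The kernel `K̃^{1,j}`. -/
def Ktil1 (δ α : ℝ) (a : ℝ → ℂ) (β : ℝ → ℝ) (j : ℕ) (r₁ r₂ : ℝ) : ℂ :=
  (((2 : ℝ) ^ (-(j : ℝ) * (3 / 2 + δ)) : ℝ) : ℂ) * ((β (r₁ + r₂) : ℝ) : ℂ) *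
    ∫ s in Set.Ioi (0 : ℝ),
      Complex.exp (Complex.I * (((2 : ℝ) ^ (j : ℝ) * dS r₁ r₂ s : ℝ) : ℂ)) *
        psi1 δ α a j r₁ r₂ s

/-- The kernel `K̃^{2,j}`, with `φ = θ₁ - θ₂`. -/
def Ktil2 (δ α : ℝ) (a : ℝ → ℂ) (β : ℝ → ℝ) (j : ℕ) (r₁ r₂ φ : ℝ) : ℂ :=
  (((2 : ℝ) ^ (-(j : ℝ) * (3 / 2 + δ)) : ℝ) : ℂ) * ((β (r₁ + r₂) : ℝ) : ℂ) *
    ∫ s in Set.Ioi (0 : ℝ),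
      Complex.exp (Complex.I * (((2 : ℝ) ^ (j : ℝ) * dS r₁ r₂ s : ℝ) : ℂ)) *
        psi2 δ α a j r₁ r₂ φ s

/-!
With `λ = 2^j`, the phase `λ d_s` has derivative `λ r₁ r₂ sinh s / d_s`, so its only stationary
point is the endpoint `s = 0`. Since `d_s ≥ r₁ + r₂ ≥ 3/8` on the support of `β`, one can write
`ψ_ℓ = u / d_s`, where `u` is bounded, decays exponentially and satisfies `|u'| ≲ coth s`. With
`X = λ r₁ r₂`, the factor `u / d_s` is `u / (X sinh s)` times the derivative of the phase, so one
integration by parts bounds the integral over `(s₀, ∞)` by a multiple of `1 / (X s₀)`. The integral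
over `(0, s₀)` is trivially at most a multiple of `s₀`, and `s₀ = X^{-1/2}` gives the decay.

For `ψ₂`, uniformity in the angle comes from
`(e^{-s} - c) sinh s = (1 - c²) - (c + e^{-s}) (cosh s - c)`, which shows that the angular factor is
`sinh (α s) / sinh s` times a function with bounds independent of `c = cos (θ₁ - θ₂ + π)`.
-/

open Filter Topology

section HyperbolicFunctions

lemma tendsto_sinh_atTop : Tendsto sinh atTop atTop :=
  tendsto_atTop_mono' _ ((eventually_ge_atTop 0).mono fun _ => self_le_sinh_iff.2) tendsto_id

lemma hasDerivAt_neg_inv_sinh {s : ℝ} (hs : s ≠ 0) :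
    HasDerivAt (fun s => -(sinh s)⁻¹) (cosh s / sinh s ^ 2) s :=
  ((hasDerivAt_sinh s).inv (sinh_ne_zero.2 hs)).neg.congr_deriv (by ring)

lemma tendsto_neg_inv_sinh_atTop : Tendsto (fun s => -(sinh s)⁻¹) atTop (𝓝 0) := by
  simpa using tendsto_sinh_atTop.inv_tendsto_atTop.neg

lemma cosh_div_sinh_sq_nonneg (s : ℝ) : 0 ≤ cosh s / sinh s ^ 2 :=
  div_nonneg (cosh_pos s).le (sq_nonneg _)

lemma integrableOn_cosh_div_sinh_sq {s₀ : ℝ} (hs₀ : 0 < s₀) :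
    IntegrableOn (fun s => cosh s / sinh s ^ 2) (Ioi s₀) :=
  integrableOn_Ioi_deriv_of_nonneg' (fun _ hs => hasDerivAt_neg_inv_sinh (hs₀.trans_le hs).ne')
    (fun s _ => cosh_div_sinh_sq_nonneg s) tendsto_neg_inv_sinh_atTop

lemma integral_cosh_div_sinh_sq {s₀ : ℝ} (hs₀ : 0 < s₀) :
    ∫ s in Ioi s₀, cosh s / sinh s ^ 2 = (sinh s₀)⁻¹ := by
  simpa using integral_Ioi_of_hasDerivAt_of_nonneg'
    (fun s hs => hasDerivAt_neg_inv_sinh (hs₀.trans_le hs).ne')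
    (fun s _ => cosh_div_sinh_sq_nonneg s) tendsto_neg_inv_sinh_atTop

lemma abs_sinh_mul_le {α s : ℝ} (hα : |α| ≤ 1) (hs : 0 ≤ s) :
    |sinh (α * s)| ≤ exp (-(1 - |α|) * s) * sinh s := by
  have h_pos : exp (-(1 - |α|) * s) * exp s = exp (|α| * s) := by
    rw [← exp_add]; congr 1; ring
  have h_neg : exp (-(1 - |α|) * s) * exp (-s) ≤ exp (-(|α| * s)) := by
    rw [← exp_add, exp_le_exp]; nlinarith
  rw [abs_sinh, abs_mul, abs_of_nonneg hs, sinh_eq, sinh_eq]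
  linarith

lemma cosh_mul_le {α : ℝ} (hα : |α| ≤ 1) (s : ℝ) : cosh (α * s) ≤ cosh s := by
  rw [cosh_le_cosh, abs_mul]
  exact mul_le_of_le_one_left (abs_nonneg s) hα

lemma cosh_sub_pos {c s : ℝ} (hc : c ≤ 1) (hs : s ≠ 0) : 0 < cosh s - c := by
  linarith [one_lt_cosh.2 hs]

lemma exp_neg_sub_mul_sinh_div_eq {c s : ℝ} (h : cosh s - c ≠ 0) :
    (exp (-s) - c) * sinh s / (cosh s - c) = (1 - c ^ 2) / (cosh s - c) - c - exp (-s) := by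
  field_simp
  rw [← cosh_sub_sinh]
  linear_combination cosh_sq s

lemma one_sub_sq_mul_sinh_sq_div_le {c s : ℝ} (hc : |c| ≤ 1) (hs : s ≠ 0) :
    (1 - c ^ 2) * sinh s ^ 2 / (cosh s - c) ^ 2 ≤ 4 * cosh s := by
  obtain ⟨hc_lower, hc_upper⟩ := abs_le.1 hc
  have hcosh := one_le_cosh s
  have hD : 0 < cosh s - c := cosh_sub_pos hc_upper hs
  have h_sub_one : (1 - c) * (cosh s - 1) ≤ (cosh s - c) ^ 2 := by nlinarith
  calc (1 - c ^ 2) * sinh s ^ 2 / (cosh s - c) ^ 2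
      = (1 + c) * (cosh s + 1) * ((1 - c) * (cosh s - 1) / (cosh s - c) ^ 2) := by
        rw [sinh_sq]; ring
    _ ≤ (1 + c) * (cosh s + 1) * 1 := by
        gcongr
        · exact mul_nonneg (by linarith) (by linarith)
        · exact (div_le_one (pow_pos hD 2)).2 h_sub_one
    _ ≤ 4 * cosh s := by nlinarith

end HyperbolicFunctions

section FirstDerivativeTest

lemma norm_integral_Ioi_cexp_mul_deriv_le {Φ Φ' : ℝ → ℝ} {G G' : ℝ → ℂ} {s₀ : ℝ}
    (hΦ : ∀ s ∈ Ici s₀, HasDerivAt Φ (Φ' s) s) (hG : ∀ s ∈ Ici s₀, HasDerivAt G (G' s) s)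
    (h_int : IntegrableOn (fun s => Complex.exp (Complex.I * (Φ s : ℂ)) * ((Φ' s : ℂ) * G s))
      (Ioi s₀))
    (hG'_int : IntegrableOn G' (Ioi s₀)) (hG_lim : Tendsto G atTop (𝓝 0)) :
    ‖∫ s in Ioi s₀, Complex.exp (Complex.I * (Φ s : ℂ)) * ((Φ' s : ℂ) * G s)‖ ≤
      ‖G s₀‖ + ∫ s in Ioi s₀, ‖G' s‖ := by
  set E : ℝ → ℂ := fun s => Complex.exp (Complex.I * (Φ s : ℂ))
  have hE_norm (s : ℝ) : ‖E s‖ = 1 := Complex.norm_exp_I_mul_ofReal (Φ s)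
  have hE (s : ℝ) (hs : s ∈ Ici s₀) : HasDerivAt E (E s * (Complex.I * (Φ' s : ℂ))) s :=
    ((hΦ s hs).ofReal_comp.const_mul Complex.I).cexp
  have hE_meas : AEStronglyMeasurable E (volume.restrict (Ioi s₀)) :=
    ContinuousOn.aestronglyMeasurable
      (fun s hs => (hE s (Ioi_subset_Ici_self hs)).continuousAt.continuousWithinAt)
      measurableSet_Ioi
  have h_lim : Tendsto (G * E) atTop (𝓝 0) :=
    squeeze_zero_norm (fun s => by rw [Pi.mul_apply, norm_mul, hE_norm, mul_one])
      (tendsto_zero_iff_norm_tendsto_zero.1 hG_lim)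
  have h_parts := integral_Ioi_mul_deriv_eq_deriv_mul
    (fun s hs => hG s (Ioi_subset_Ici_self hs)) (fun s hs => hE s (Ioi_subset_Ici_self hs))
    ((h_int.const_mul Complex.I).congr
      (Eventually.of_forall fun s => by simp only [Pi.mul_apply]; ring))
    (hG'_int.mul_bdd hE_meas (Eventually.of_forall fun s => (hE_norm s).le))
    (((hG s₀ self_mem_Ici).continuousAt.mul
      (hE s₀ self_mem_Ici).continuousAt).continuousWithinAt) h_lim
  calc ‖∫ s in Ioi s₀, E s * ((Φ' s : ℂ) * G s)‖
      = ‖Complex.I * ∫ s in Ioi s₀, E s * ((Φ' s : ℂ) * G s)‖ := by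
        rw [norm_mul, Complex.norm_I, one_mul]
    _ = ‖∫ s in Ioi s₀, G s * (E s * (Complex.I * (Φ' s : ℂ)))‖ := by
        rw [← integral_const_mul]; congr 2 with s; ring
    _ = ‖G s₀ * E s₀ + ∫ s in Ioi s₀, G' s * E s‖ := by
        rw [h_parts, ← norm_neg, Pi.mul_apply]; congr 1; ring
    _ ≤ ‖G s₀‖ + ∫ s in Ioi s₀, ‖G' s‖ := by
        refine (norm_add_le _ _).trans (add_le_add (by simp [hE_norm]) ?_)
        refine norm_integral_le_of_norm_le hG'_int.norm (Eventually.of_forall fun s => ?_)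
        rw [norm_mul, hE_norm, mul_one]

end FirstDerivativeTest

/-- A bound `A` for `f` on `S ⊆ ℝ` as a symbol of order `0`, up to the first derivative. -/
structure HasSymbolBound (A : ℝ) (S : Set ℝ) (f : ℝ → ℂ) : Prop where
  differentiableAt : ∀ x ∈ S, DifferentiableAt ℝ f x
  norm_le : ∀ x ∈ S, ‖f x‖ ≤ A
  mul_norm_deriv_le : ∀ x ∈ S, x * ‖deriv f x‖ ≤ A

namespace HasSymbolBound

variable {A B : ℝ} {S T : Set ℝ} {f g : ℝ → ℂ}

lemma mono (hf : HasSymbolBound A T f) (hST : S ⊆ T) : HasSymbolBound A S f where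
  differentiableAt x hx := hf.differentiableAt x (hST hx)
  norm_le x hx := hf.norm_le x (hST hx)
  mul_norm_deriv_le x hx := hf.mul_norm_deriv_le x (hST hx)

lemma mul (hS : S ⊆ Ici 0) (hf : HasSymbolBound A S f) (hg : HasSymbolBound B S g) :
    HasSymbolBound (2 * (A * B)) S (fun x => f x * g x) where
  differentiableAt x hx := (hf.differentiableAt x hx).mul (hg.differentiableAt x hx)
  norm_le x hx := by
    have hf_le := hf.norm_le x hx
    have hg_le := hg.norm_le x hx
    have h_nonneg : 0 ≤ A * B := by
      have := norm_nonneg (f x); have := norm_nonneg (g x); nlinarith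
    calc ‖f x * g x‖ = ‖f x‖ * ‖g x‖ := norm_mul _ _
      _ ≤ A * B := mul_le_mul hf_le hg_le (norm_nonneg _) ((norm_nonneg _).trans hf_le)
      _ ≤ 2 * (A * B) := by linarith
  mul_norm_deriv_le x hx := by
    have hx0 : 0 ≤ x := hS hx
    have hf_le := hf.norm_le x hx
    have hf'_le := hf.mul_norm_deriv_le x hx
    have hg_le := hg.norm_le x hx
    have hg'_le := hg.mul_norm_deriv_le x hx
    have hA : 0 ≤ A := (norm_nonneg _).trans hf_le
    calc x * ‖deriv (fun x => f x * g x) x‖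
        = x * ‖deriv f x * g x + f x * deriv g x‖ := by
          rw [deriv_fun_mul (hf.differentiableAt x hx) (hg.differentiableAt x hx)]
      _ ≤ x * (‖deriv f x‖ * ‖g x‖ + ‖f x‖ * ‖deriv g x‖) := by
          gcongr
          exact (norm_add_le _ _).trans_eq (by rw [norm_mul, norm_mul])
      _ = (x * ‖deriv f x‖) * ‖g x‖ + ‖f x‖ * (x * ‖deriv g x‖) := by ring
      _ ≤ A * B + A * B := by gcongr
      _ = 2 * (A * B) := by ring

lemma comp_mul_left (hf : HasSymbolBound A (Ioi 0) f) {t : ℝ} (ht : 0 < t) :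
    HasSymbolBound A (Ioi 0) (fun x => f (t * x)) where
  differentiableAt x hx :=
    (hf.differentiableAt (t * x) (mul_pos ht hx)).comp x (differentiableAt_id.const_mul t)
  norm_le x hx := hf.norm_le (t * x) (mul_pos ht hx)
  mul_norm_deriv_le x hx := by
    have h := hf.mul_norm_deriv_le (t * x) (mul_pos ht hx)
    rw [deriv_comp_mul_left t f x, norm_smul, norm_of_nonneg ht.le]
    linarith

end HasSymbolBound

lemma hasSymbolBound_mul_rpow {c q μ : ℝ} (hc : 0 < c) (hq : 1 ≤ q) (hμ : 0 ≤ μ) :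
    HasSymbolBound ((1 + q) * c ^ (1 - q)) (Ici c) (fun x => ((x * (μ + x) ^ (-q) : ℝ) : ℂ)) := by
  have h_deriv (x : ℝ) (hx : x ∈ Ici c) : HasDerivAt (fun x : ℝ => x * (μ + x) ^ (-q))
      ((μ + x) ^ (-q) + x * (-q * (μ + x) ^ (-q - 1))) x := by
    have hμx : μ + x ≠ 0 := (add_pos_of_nonneg_of_pos hμ (hc.trans_le hx)).ne'
    have h_rpow := ((hasDerivAt_id x).const_add μ).rpow_const (p := -q) (Or.inl hμx)
    exact ((hasDerivAt_id x).mul h_rpow).congr_deriv (by simp only [id_eq]; ring)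
  have h_le (x : ℝ) (hx : x ∈ Ici c) : x * (μ + x) ^ (-q) ≤ c ^ (1 - q) := by
    have hx0 : 0 < x := hc.trans_le hx
    calc x * (μ + x) ^ (-q) ≤ x * x ^ (-q) := by
          gcongr ?_ * ?_
          exact rpow_le_rpow_of_nonpos hx0 (by linarith) (by linarith)
      _ = x ^ (1 - q) := by rw [sub_eq_add_neg, rpow_add hx0, rpow_one]
      _ ≤ c ^ (1 - q) := rpow_le_rpow_of_nonpos hc hx (by linarith)
  refine ⟨fun x hx => (h_deriv x hx).ofReal_comp.differentiableAt, fun x hx => ?_, fun x hx => ?_⟩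
  all_goals
    have hx0 : 0 < x := hc.trans_le hx
    have hμx : 0 < μ + x := by linarith
  · rw [Complex.norm_real, norm_of_nonneg (by positivity)]
    nlinarith [h_le x hx, rpow_pos_of_pos hc (1 - q)]
  · have h_ratio : x / (μ + x) ≤ 1 := (div_le_one hμx).2 (by linarith)
    have h_ratio_nonneg : 0 ≤ x / (μ + x) := by positivity
    calc x * ‖deriv (fun x : ℝ => ((x * (μ + x) ^ (-q) : ℝ) : ℂ)) x‖
        = x * |(μ + x) ^ (-q) * (1 - q * (x / (μ + x)))| := by
          rw [(h_deriv x hx).ofReal_comp.deriv, Complex.norm_real, norm_eq_abs,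
            rpow_sub_one hμx.ne']
          congr 2; ring
      _ = |1 - q * (x / (μ + x))| * (x * (μ + x) ^ (-q)) := by
          rw [abs_mul, abs_of_pos (rpow_pos_of_pos hμx _)]; ring
      _ ≤ (1 + q) * c ^ (1 - q) := by
          gcongr
          · exact abs_le.2 ⟨by nlinarith, by nlinarith⟩
          · exact h_le x hx

lemma IsSymbol0.exists_hasSymbolBound {a : ℝ → ℂ} (ha : IsSymbol0 a) :
    ∃ M, HasSymbolBound M (Ioi 0) a := by
  obtain ⟨h_smooth, ⟨M, hM⟩, h_deriv⟩ := ha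
  obtain ⟨C, hC⟩ := h_deriv 1
  refine ⟨max M C, fun x hx => ?_, fun x hx => (hM x hx).trans (le_max_left M C),
    fun x hx => le_max_of_le_right ?_⟩
  · exact (h_smooth.differentiableOn (by simp)).differentiableAt (Ioi_mem_nhds hx)
  · have h := hC x hx
    rw [iteratedDerivWithin_one, derivWithin_of_isOpen isOpen_Ioi hx, Nat.cast_one,
      rpow_neg_one, ← div_eq_mul_inv, le_div_iff₀' hx] at h
    exact h

/-- Amplitudes for phases that are stationary at the origin like `cosh`: the amplitude decays at
rate `κ`, and its derivative is allowed to blow up like `1 / s` as `s → 0`. -/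
structure IsAmplitude (B κ : ℝ) (u : ℝ → ℂ) : Prop where
  differentiableAt : ∀ s > 0, DifferentiableAt ℝ u s
  norm_le : ∀ s > 0, ‖u s‖ ≤ B * exp (-κ * s)
  norm_deriv_mul_sinh_le : ∀ s > 0, ‖deriv u s‖ * sinh s ≤ B * cosh s

lemma HasSymbolBound.isAmplitude_comp {A : ℝ} {S : Set ℝ} {f : ℝ → ℂ} {d d' : ℝ → ℝ}
    (hf : HasSymbolBound A S f) (hd : ∀ s > 0, HasDerivAt d (d' s) s) (hdS : ∀ s > 0, d s ∈ S)
    (hd' : ∀ s > 0, |d' s| ≤ d s) : IsAmplitude A 0 (fun s => f (d s)) where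
  differentiableAt s hs :=
    (hf.differentiableAt _ (hdS s hs)).comp s (hd s hs).differentiableAt
  norm_le s hs := by simpa using hf.norm_le _ (hdS s hs)
  norm_deriv_mul_sinh_le s hs := by
    have h_deriv := (hf.differentiableAt _ (hdS s hs)).hasDerivAt.scomp s (hd s hs)
    have hA : 0 ≤ A := (norm_nonneg _).trans (hf.norm_le _ (hdS s hs))
    have h_norm : ‖deriv (fun s => f (d s)) s‖ ≤ A := by
      calc ‖deriv (fun s => f (d s)) s‖ = |d' s| * ‖deriv f (d s)‖ := by
            rw [← norm_eq_abs, ← norm_smul]; exact congrArg norm h_deriv.deriv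
        _ ≤ d s * ‖deriv f (d s)‖ := by gcongr; exact hd' s hs
        _ ≤ A := hf.mul_norm_deriv_le _ (hdS s hs)
    have := sinh_pos_iff.2 hs
    have := (sinh_lt_cosh s).le
    gcongr

namespace IsAmplitude

variable {A B κ κ₁ κ₂ : ℝ} {u v : ℝ → ℂ}

lemma of_hasDerivAt_ofReal {g g' : ℝ → ℝ} (hg : ∀ s > 0, HasDerivAt g (g' s) s)
    (hg_le : ∀ s > 0, |g s| ≤ B * exp (-κ * s))
    (hg'_le : ∀ s > 0, |g' s| * sinh s ≤ B * cosh s) :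
    IsAmplitude B κ (fun s => (g s : ℂ)) where
  differentiableAt s hs := (hg s hs).ofReal_comp.differentiableAt
  norm_le s hs := by simpa using hg_le s hs
  norm_deriv_mul_sinh_le s hs := by simpa [(hg s hs).ofReal_comp.deriv] using hg'_le s hs

lemma const_nonneg (hu : IsAmplitude B κ u) : 0 ≤ B :=
  nonneg_of_mul_nonneg_left ((norm_nonneg _).trans (hu.norm_le 1 one_pos)) (exp_pos _)

lemma norm_le_const (hu : IsAmplitude B κ u) (hκ : 0 ≤ κ) {s : ℝ} (hs : 0 < s) : ‖u s‖ ≤ B :=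
  (hu.norm_le s hs).trans <| mul_le_of_le_one_right hu.const_nonneg <|
    exp_le_one_iff.2 <| by nlinarith

lemma mul (hκ₁ : 0 ≤ κ₁) (hκ₂ : 0 ≤ κ₂) (hu : IsAmplitude A κ₁ u) (hv : IsAmplitude B κ₂ v) :
    IsAmplitude (2 * (A * B)) (κ₁ + κ₂) (fun s => u s * v s) where
  differentiableAt s hs := (hu.differentiableAt s hs).mul (hv.differentiableAt s hs)
  norm_le s hs := by
    have hA := hu.const_nonneg
    have hB := hv.const_nonneg
    calc ‖u s * v s‖ = ‖u s‖ * ‖v s‖ := norm_mul _ _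
      _ ≤ (A * exp (-κ₁ * s)) * (B * exp (-κ₂ * s)) := by
          gcongr
          · exact hu.norm_le s hs
          · exact hv.norm_le s hs
      _ = A * B * exp (-(κ₁ + κ₂) * s) := by
          rw [neg_add, add_mul, exp_add]; ring
      _ ≤ 2 * (A * B) * exp (-(κ₁ + κ₂) * s) := by
          gcongr ?_ * _; linarith [mul_nonneg hA hB]
  norm_deriv_mul_sinh_le s hs := by
    have hA := hu.const_nonneg
    have := sinh_pos_iff.2 hs
    calc ‖deriv (fun s => u s * v s) s‖ * sinh s
        ≤ (‖deriv u s‖ * ‖v s‖ + ‖u s‖ * ‖deriv v s‖) * sinh s := by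
          rw [deriv_fun_mul (hu.differentiableAt s hs) (hv.differentiableAt s hs)]
          gcongr
          exact (norm_add_le _ _).trans_eq (by rw [norm_mul, norm_mul])
      _ = (‖deriv u s‖ * sinh s) * ‖v s‖ + ‖u s‖ * (‖deriv v s‖ * sinh s) := by ring
      _ ≤ (A * cosh s) * B + A * (B * cosh s) := by
          have := cosh_pos s
          exact add_le_add
            (mul_le_mul (hu.norm_deriv_mul_sinh_le s hs) (hv.norm_le_const hκ₂ hs)
              (norm_nonneg _) (by positivity))
            (mul_le_mul (hu.norm_le_const hκ₁ hs) (hv.norm_deriv_mul_sinh_le s hs)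
              (by positivity) hA)
      _ = 2 * (A * B) * cosh s := by ring

lemma congr (hu : IsAmplitude B κ u) (h : EqOn u v (Ioi 0)) : IsAmplitude B κ v := by
  have h_eventuallyEq (s : ℝ) (hs : s > 0) : u =ᶠ[𝓝 s] v :=
    h.eventuallyEq_of_mem (Ioi_mem_nhds hs)
  refine ⟨fun s hs => ?_, fun s hs => ?_, fun s hs => ?_⟩
  · exact (h_eventuallyEq s hs).differentiableAt_iff.1 (hu.differentiableAt s hs)
  · exact h hs ▸ hu.norm_le s hs
  · exact (h_eventuallyEq s hs).deriv_eq ▸ hu.norm_deriv_mul_sinh_le s hs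

lemma differentiableAt_div_sinh (hu : IsAmplitude B κ u) {s : ℝ} (hs : 0 < s) :
    DifferentiableAt ℝ (fun s => u s / (sinh s : ℂ)) s :=
  (hu.differentiableAt s hs).div (hasDerivAt_sinh s).ofReal_comp.differentiableAt
    (Complex.ofReal_ne_zero.2 (sinh_pos_iff.2 hs).ne')

lemma norm_div_sinh_le (hu : IsAmplitude B κ u) (hκ : 0 ≤ κ) {s : ℝ} (hs : 0 < s) :
    ‖u s / (sinh s : ℂ)‖ ≤ B * (sinh s)⁻¹ := by
  have hsinh := sinh_pos_iff.2 hs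
  rw [norm_div, Complex.norm_real, norm_of_nonneg hsinh.le, div_eq_mul_inv]
  gcongr
  exact hu.norm_le_const hκ hs

lemma tendsto_div_sinh (hu : IsAmplitude B κ u) (hκ : 0 ≤ κ) :
    Tendsto (fun s => u s / (sinh s : ℂ)) atTop (𝓝 0) := by
  refine squeeze_zero_norm'
    ((eventually_gt_atTop 0).mono fun s hs => hu.norm_div_sinh_le hκ hs) ?_
  simpa using tendsto_sinh_atTop.inv_tendsto_atTop.const_mul B

lemma norm_deriv_div_sinh_le (hu : IsAmplitude B κ u) (hκ : 0 ≤ κ) {s : ℝ}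
    (hs : 0 < s) : ‖deriv (fun s => u s / (sinh s : ℂ)) s‖ ≤ 2 * B * (cosh s / sinh s ^ 2) := by
  have hsinh := sinh_pos_iff.2 hs
  have h_deriv : HasDerivAt (fun s => u s / (sinh s : ℂ))
      ((deriv u s * (sinh s : ℂ) - u s * (cosh s : ℂ)) / (sinh s : ℂ) ^ 2) s :=
    (hu.differentiableAt s hs).hasDerivAt.div (hasDerivAt_sinh s).ofReal_comp
      (Complex.ofReal_ne_zero.2 hsinh.ne')
  calc ‖deriv (fun s => u s / (sinh s : ℂ)) s‖
      = ‖deriv u s * (sinh s : ℂ) - u s * (cosh s : ℂ)‖ / sinh s ^ 2 := by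
        rw [h_deriv.deriv, norm_div, norm_pow, Complex.norm_real, norm_of_nonneg hsinh.le]
    _ ≤ (‖deriv u s‖ * sinh s + ‖u s‖ * cosh s) / sinh s ^ 2 := by
        gcongr
        refine (norm_sub_le _ _).trans_eq ?_
        rw [norm_mul, norm_mul, Complex.norm_real, Complex.norm_real, norm_of_nonneg hsinh.le,
          norm_of_nonneg (cosh_pos s).le]
    _ ≤ (B * cosh s + B * cosh s) / sinh s ^ 2 := by
        have h_deriv_le := hu.norm_deriv_mul_sinh_le s hs
        have h_norm_le := mul_le_mul_of_nonneg_right (hu.norm_le_const hκ hs) (cosh_pos s).le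
        gcongr ?_ / _
        exact add_le_add h_deriv_le h_norm_le
    _ = 2 * B * (cosh s / sinh s ^ 2) := by ring

lemma integrableOn_deriv_div_sinh (hu : IsAmplitude B κ u) (hκ : 0 ≤ κ) {s₀ : ℝ} (hs₀ : 0 < s₀) :
    IntegrableOn (deriv fun s => u s / (sinh s : ℂ)) (Ioi s₀) :=
  ((integrableOn_cosh_div_sinh_sq hs₀).const_mul (2 * B)).mono' (aestronglyMeasurable_deriv _ _)
    (ae_restrict_of_forall_mem measurableSet_Ioi fun _ hs =>
      hu.norm_deriv_div_sinh_le hκ (hs₀.trans hs))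

lemma integral_norm_deriv_div_sinh_le (hu : IsAmplitude B κ u) (hκ : 0 ≤ κ) {s₀ : ℝ}
    (hs₀ : 0 < s₀) :
    ∫ s in Ioi s₀, ‖deriv (fun s => u s / (sinh s : ℂ)) s‖ ≤ 2 * B * (sinh s₀)⁻¹ := by
  rw [← integral_cosh_div_sinh_sq hs₀, ← integral_const_mul]
  exact setIntegral_mono_on (hu.integrableOn_deriv_div_sinh hκ hs₀).norm
    ((integrableOn_cosh_div_sinh_sq hs₀).const_mul _) measurableSet_Ioi
    fun _ hs => hu.norm_deriv_div_sinh_le hκ (hs₀.trans hs)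

end IsAmplitude

lemma isAmplitude_exp_neg_mul {κ : ℝ} (hκ : 0 ≤ κ) :
    IsAmplitude (1 + κ) κ (fun s => ((exp (-κ * s) : ℝ) : ℂ)) := by
  refine IsAmplitude.of_hasDerivAt_ofReal
    (fun s _ => (((hasDerivAt_id s).const_mul (-κ)).exp).congr_deriv (by rw [mul_one, id]))
    (fun s _ => ?_) (fun s hs => ?_)
  · rw [abs_of_pos (exp_pos _)]
    exact le_mul_of_one_le_left (exp_pos _).le (by linarith)
  · have h_exp : exp (-κ * s) ≤ 1 := exp_le_one_iff.2 (by nlinarith)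
    have := sinh_pos_iff.2 hs
    rw [abs_mul, abs_neg, abs_of_pos (exp_pos _), abs_of_nonneg hκ]
    calc exp (-κ * s) * κ * sinh s ≤ 1 * κ * cosh s := by
          gcongr; exact (sinh_lt_cosh s).le
      _ ≤ (1 + κ) * cosh s := by gcongr; linarith

lemma isAmplitude_sinh_mul_div_sinh {α : ℝ} (hα : |α| ≤ 1) :
    IsAmplitude 2 (1 - |α|) (fun s => ((sinh (α * s) / sinh s : ℝ) : ℂ)) := by
  refine IsAmplitude.of_hasDerivAt_ofReal
    (fun s hs => (((hasDerivAt_id s).const_mul α).sinh).div (hasDerivAt_sinh s)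
      (sinh_pos_iff.2 hs).ne') (fun s hs => ?_) (fun s hs => ?_)
  all_goals
    have hsinh := sinh_pos_iff.2 hs
    have h_sinh_mul := abs_sinh_mul_le hα hs.le
  · rw [abs_div, abs_of_pos hsinh, div_le_iff₀ hsinh]
    nlinarith [abs_nonneg (sinh (α * s))]
  · have h_exp : exp (-(1 - |α|) * s) ≤ 1 := exp_le_one_iff.2 (by nlinarith)
    have h_cosh_mul : |cosh (α * s) * α| ≤ cosh s := by
      rw [abs_mul, abs_of_pos (cosh_pos _)]
      nlinarith [cosh_mul_le hα s, abs_nonneg α, cosh_pos (α * s)]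
    have h_num : |cosh (α * s) * α * sinh s - sinh (α * s) * cosh s| ≤ 2 * cosh s * sinh s := by
      calc |cosh (α * s) * α * sinh s - sinh (α * s) * cosh s|
          ≤ |cosh (α * s) * α| * sinh s + |sinh (α * s)| * cosh s := by
            refine (abs_sub _ _).trans_eq ?_
            rw [abs_mul _ (sinh s), abs_mul _ (cosh s), abs_of_pos hsinh, abs_of_pos (cosh_pos s)]
        _ ≤ cosh s * sinh s + (1 * sinh s) * cosh s := by
            have := cosh_pos s
            gcongr
            exact h_sinh_mul.trans (by gcongr)
        _ = 2 * cosh s * sinh s := by ring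
    simp only [id_eq, mul_one]
    rw [abs_div, abs_of_pos (pow_pos hsinh 2), div_mul_eq_mul_div, div_le_iff₀ (by positivity)]
    nlinarith

lemma isAmplitude_one_sub_sq_div_cosh_sub {c : ℝ} (hc : |c| ≤ 1) :
    IsAmplitude 5 0 (fun s => (((1 - c ^ 2) / (cosh s - c) - c - exp (-s) : ℝ) : ℂ)) := by
  obtain ⟨hc_lower, hc_upper⟩ := abs_le.1 hc
  refine IsAmplitude.of_hasDerivAt_ofReal (g' := fun s =>
      exp (-s) - (1 - c ^ 2) * sinh s / (cosh s - c) ^ 2) (fun s hs => ?_) (fun s hs => ?_)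
    (fun s hs => ?_)
  all_goals
    have hD : 0 < cosh s - c := cosh_sub_pos hc_upper hs.ne'
    have hcosh := one_le_cosh s
  · have h_quot := (hasDerivAt_const s (1 - c ^ 2)).div ((hasDerivAt_cosh s).sub_const c) hD.ne'
    exact ((h_quot.sub_const c).sub (hasDerivAt_neg s).exp).congr_deriv (by ring)
  · have h_exp : exp (-s) ≤ 1 := exp_le_one_iff.2 (by linarith)
    have h_exp_pos := exp_pos (-s)
    have h_quot : (1 - c ^ 2) / (cosh s - c) ≤ 1 + c := by
      rw [div_le_iff₀ hD]; nlinarith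
    have h_quot_nonneg : 0 ≤ (1 - c ^ 2) / (cosh s - c) := div_nonneg (by nlinarith) hD.le
    rw [neg_zero, zero_mul, exp_zero, mul_one, abs_le]
    constructor <;> linarith
  · have hsinh := sinh_pos_iff.2 hs
    have h_exp : exp (-s) * sinh s ≤ cosh s := by
      have h_exp_le : exp (-s) ≤ 1 := exp_le_one_iff.2 (by linarith)
      nlinarith [sinh_lt_cosh s]
    have h_quot := one_sub_sq_mul_sinh_sq_div_le hc hs.ne'
    calc |exp (-s) - (1 - c ^ 2) * sinh s / (cosh s - c) ^ 2| * sinh s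
        ≤ (exp (-s) + (1 - c ^ 2) * sinh s / (cosh s - c) ^ 2) * sinh s := by
          have h_nonneg : 0 ≤ (1 - c ^ 2) * sinh s / (cosh s - c) ^ 2 :=
            div_nonneg (mul_nonneg (by nlinarith) hsinh.le) (sq_nonneg _)
          gcongr
          rw [abs_le]
          constructor <;> linarith [exp_pos (-s)]
      _ = exp (-s) * sinh s + (1 - c ^ 2) * sinh s ^ 2 / (cosh s - c) ^ 2 := by ring
      _ ≤ 5 * cosh s := by linarith

lemma isAmplitude_exp_neg_sub_mul_sinh_mul_div {α c : ℝ} (hα : |α| ≤ 1) (hc : |c| ≤ 1) :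
    IsAmplitude 20 (1 - |α|)
      (fun s => (((exp (-s) - c) * sinh (α * s) / (cosh s - c) : ℝ) : ℂ)) := by
  have h_mul := (isAmplitude_one_sub_sq_div_cosh_sub hc).mul le_rfl (sub_nonneg.2 hα)
    (isAmplitude_sinh_mul_div_sinh hα)
  rw [zero_add, show (2 : ℝ) * (5 * 2) = 20 by norm_num] at h_mul
  refine h_mul.congr fun s (hs : 0 < s) => ?_
  have hD := (cosh_sub_pos (le_of_abs_le hc) hs.ne').ne'
  have hsinh := (sinh_pos_iff.2 hs).ne'
  have h_eq : (exp (-s) - c) * sinh (α * s) / (cosh s - c) =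
      ((1 - c ^ 2) / (cosh s - c) - c - exp (-s)) * (sinh (α * s) / sinh s) := by
    rw [← exp_neg_sub_mul_sinh_div_eq hD]
    field_simp
  beta_reduce
  exact_mod_cast h_eq.symm

section EndpointStationaryPhase

variable {Φ w : ℝ → ℝ} {u : ℝ → ℂ} {B κ W X : ℝ}

lemma norm_cexp_mul_mul_le (hw : ∀ s > 0, |w s| ≤ W) (hu : IsAmplitude B κ u) {s : ℝ}
    (hs : 0 < s) :
    ‖Complex.exp (Complex.I * (Φ s : ℂ)) * ((w s : ℂ) * u s)‖ ≤ W * B * exp (-κ * s) := by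
  have hW : 0 ≤ W := (abs_nonneg _).trans (hw s hs)
  rw [norm_mul, Complex.norm_exp_I_mul_ofReal, one_mul, norm_mul, Complex.norm_real, norm_eq_abs,
    mul_assoc]
  exact mul_le_mul (hw s hs) (hu.norm_le s hs) (norm_nonneg _) hW

lemma integrableOn_cexp_mul_mul (hκ : 0 < κ) (hΦ : ContinuousOn Φ (Ioi 0))
    (hw_cont : ContinuousOn w (Ioi 0)) (hw : ∀ s > 0, |w s| ≤ W) (hu : IsAmplitude B κ u) :
    IntegrableOn (fun s => Complex.exp (Complex.I * (Φ s : ℂ)) * ((w s : ℂ) * u s)) (Ioi 0) := by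
  have hu_cont : ContinuousOn u (Ioi 0) := fun s hs =>
    (hu.differentiableAt s hs).continuousAt.continuousWithinAt
  exact ((integrableOn_exp_mul_Ioi (neg_lt_zero.2 hκ) 0).const_mul (W * B)).mono'
    (ContinuousOn.aestronglyMeasurable (by fun_prop) measurableSet_Ioi)
    (ae_restrict_of_forall_mem measurableSet_Ioi fun s hs => norm_cexp_mul_mul_le hw hu hs)

lemma norm_integral_Ioi_zero_cexp_mul_mul_le_div (hκ : 0 < κ) (hw : ∀ s > 0, |w s| ≤ W)
    (hu : IsAmplitude B κ u) :
    ‖∫ s in Ioi 0, Complex.exp (Complex.I * (Φ s : ℂ)) * ((w s : ℂ) * u s)‖ ≤ W * B / κ := by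
  calc ‖∫ s in Ioi 0, Complex.exp (Complex.I * (Φ s : ℂ)) * ((w s : ℂ) * u s)‖
      ≤ ∫ s in Ioi 0, W * B * exp (-κ * s) :=
        norm_integral_le_of_norm_le ((integrableOn_exp_mul_Ioi (neg_lt_zero.2 hκ) 0).const_mul _)
          (ae_restrict_of_forall_mem measurableSet_Ioi fun s hs => norm_cexp_mul_mul_le hw hu hs)
    _ = W * B / κ := by
        rw [integral_const_mul, integral_exp_mul_Ioi (neg_lt_zero.2 hκ)]
        simp [div_eq_mul_inv]

lemma norm_integral_Ioc_zero_cexp_mul_mul_le (hκ : 0 ≤ κ) (hw : ∀ s > 0, |w s| ≤ W)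
    (hu : IsAmplitude B κ u) {s₀ : ℝ} (hs₀ : 0 ≤ s₀) :
    ‖∫ s in Ioc 0 s₀, Complex.exp (Complex.I * (Φ s : ℂ)) * ((w s : ℂ) * u s)‖ ≤ W * B * s₀ := by
  have hW : 0 ≤ W := (abs_nonneg _).trans (hw 1 one_pos)
  have hB : 0 ≤ B := hu.const_nonneg
  have h := norm_setIntegral_le_of_norm_le_const (μ := volume) (s := Ioc 0 s₀)
    (f := fun s => Complex.exp (Complex.I * (Φ s : ℂ)) * ((w s : ℂ) * u s)) (C := W * B)
    measure_Ioc_lt_top fun s hs => (norm_cexp_mul_mul_le hw hu hs.1).trans <|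
      mul_le_of_le_one_right (by positivity) <| exp_le_one_iff.2 <| by nlinarith [hs.1]
  simpa [hs₀] using h

lemma norm_integral_Ioi_cexp_mul_mul_le (hX : 0 < X) (hκ : 0 < κ)
    (hΦ : ∀ s > 0, HasDerivAt Φ (X * sinh s * w s) s) (hw_cont : ContinuousOn w (Ioi 0))
    (hw : ∀ s > 0, |w s| ≤ W) (hu : IsAmplitude B κ u) {s₀ : ℝ} (hs₀ : 0 < s₀) :
    ‖∫ s in Ioi s₀, Complex.exp (Complex.I * (Φ s : ℂ)) * ((w s : ℂ) * u s)‖ ≤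
      3 * B / (X * sinh s₀) := by
  set v : ℝ → ℂ := fun s => u s / (sinh s : ℂ)
  have h_phase (s : ℝ) (hs : s ∈ Ioi s₀) :
      Complex.exp (Complex.I * (Φ s : ℂ)) * ((w s : ℂ) * u s) =
        Complex.exp (Complex.I * (Φ s : ℂ)) *
          (((X * sinh s * w s : ℝ) : ℂ) * (v s / (X : ℂ))) := by
    have hsinh : ((sinh s : ℝ) : ℂ) ≠ 0 :=
      Complex.ofReal_ne_zero.2 (sinh_pos_iff.2 (hs₀.trans hs)).ne'
    have hX' : (X : ℂ) ≠ 0 := Complex.ofReal_ne_zero.2 hX.ne'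
    simp only [v, Complex.ofReal_mul]
    field_simp
  have h_int : IntegrableOn (fun s => Complex.exp (Complex.I * (Φ s : ℂ)) *
      ((w s : ℂ) * u s)) (Ioi s₀) :=
    (integrableOn_cexp_mul_mul hκ (fun s hs => (hΦ s hs).continuousAt.continuousWithinAt) hw_cont
      hw hu).mono_set (Ioi_subset_Ioi hs₀.le)
  calc ‖∫ s in Ioi s₀, Complex.exp (Complex.I * (Φ s : ℂ)) * ((w s : ℂ) * u s)‖
      ≤ ‖v s₀ / (X : ℂ)‖ + ∫ s in Ioi s₀, ‖deriv v s / (X : ℂ)‖ := by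
        rw [setIntegral_congr_fun measurableSet_Ioi h_phase]
        refine norm_integral_Ioi_cexp_mul_deriv_le (fun s hs => hΦ s (hs₀.trans_le hs))
          (fun s hs => (hu.differentiableAt_div_sinh (hs₀.trans_le hs)).hasDerivAt.div_const _)
          (h_int.congr_fun h_phase measurableSet_Ioi)
          ((hu.integrableOn_deriv_div_sinh hκ.le hs₀).div_const _) ?_
        exact zero_div (X : ℂ) ▸ (hu.tendsto_div_sinh hκ.le).div_const (X : ℂ)
    _ = (‖v s₀‖ + ∫ s in Ioi s₀, ‖deriv v s‖) / X := by
        simp only [norm_div, Complex.norm_real, norm_of_nonneg hX.le, integral_div, add_div]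
    _ ≤ (B * (sinh s₀)⁻¹ + 2 * B * (sinh s₀)⁻¹) / X := by
        gcongr ?_ / X
        exact add_le_add (hu.norm_div_sinh_le hκ.le hs₀)
          (hu.integral_norm_deriv_div_sinh_le hκ.le hs₀)
    _ = 3 * B / (X * sinh s₀) := by
        field_simp; ring

lemma norm_integral_Ioi_zero_cexp_mul_mul_mul_sqrt_le (hX : 0 ≤ X) (hκ : 0 < κ)
    (hΦ : ∀ s > 0, HasDerivAt Φ (X * sinh s * w s) s) (hw_cont : ContinuousOn w (Ioi 0))
    (hw : ∀ s > 0, |w s| ≤ W) (hu : IsAmplitude B κ u) :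
    ‖∫ s in Ioi 0, Complex.exp (Complex.I * (Φ s : ℂ)) * ((w s : ℂ) * u s)‖ * √X ≤
      W * B + 3 * B := by
  have hB : 0 ≤ B := hu.const_nonneg
  have hW : 0 ≤ W := (abs_nonneg _).trans (hw 1 one_pos)
  obtain rfl | hX := hX.eq_or_lt
  · rw [sqrt_zero, mul_zero]; positivity
  have h_int := integrableOn_cexp_mul_mul hκ
    (fun s hs => (hΦ s hs).continuousAt.continuousWithinAt) hw_cont hw hu
  -- The trivial bound on `(0, s₀]` balances the one from integration by parts on `(s₀, ∞)`.
  set s₀ : ℝ := (√X)⁻¹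
  have hs₀ : 0 < s₀ := inv_pos.2 (sqrt_pos.2 hX)
  have hXs₀ : X * s₀ = √X := by rw [← div_eq_mul_inv, div_sqrt]
  calc ‖∫ s in Ioi 0, Complex.exp (Complex.I * (Φ s : ℂ)) * ((w s : ℂ) * u s)‖ * √X
      ≤ (W * B * s₀ + 3 * B / (X * sinh s₀)) * √X := by
        rw [← Ioc_union_Ioi_eq_Ioi hs₀.le, setIntegral_union (Ioc_disjoint_Ioi le_rfl)
          measurableSet_Ioi (h_int.mono_set Ioc_subset_Ioi_self)
          (h_int.mono_set (Ioi_subset_Ioi hs₀.le))]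
        gcongr
        exact (norm_add_le _ _).trans <| add_le_add
          (norm_integral_Ioc_zero_cexp_mul_mul_le hκ.le hw hu hs₀.le)
          (norm_integral_Ioi_cexp_mul_mul_le hX hκ hΦ hw_cont hw hu hs₀)
    _ ≤ (W * B * s₀ + 3 * B / (X * s₀)) * √X := by
        gcongr
        exact self_le_sinh_iff.2 hs₀.le
    _ = W * B + 3 * B := by
        rw [hXs₀]
        simp only [s₀]
        field_simp

theorem norm_integral_Ioi_zero_cexp_mul_mul_le_rpow (hX : 0 ≤ X) (hκ : 0 < κ)
    (hΦ : ∀ s > 0, HasDerivAt Φ (X * sinh s * w s) s) (hw_cont : ContinuousOn w (Ioi 0))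
    (hw : ∀ s > 0, |w s| ≤ W) (hu : IsAmplitude B κ u) :
    ‖∫ s in Ioi 0, Complex.exp (Complex.I * (Φ s : ℂ)) * ((w s : ℂ) * u s)‖ ≤
      (W * B / κ + W * B + 3 * B) * (1 + X) ^ (-(1 : ℝ) / 2) := by
  have h_trivial := norm_integral_Ioi_zero_cexp_mul_mul_le_div (Φ := Φ) hκ hw hu
  have h_decay := norm_integral_Ioi_zero_cexp_mul_mul_mul_sqrt_le hX hκ hΦ hw_cont hw hu
  set J := ‖∫ s in Ioi 0, Complex.exp (Complex.I * (Φ s : ℂ)) * ((w s : ℂ) * u s)‖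
  have h_sqrt : √(1 + X) ≤ 1 + √X := by
    rw [sqrt_le_left (by positivity)]
    nlinarith [sq_sqrt hX, sqrt_nonneg X]
  rw [neg_div, rpow_neg (by positivity), ← sqrt_eq_rpow, ← div_eq_mul_inv,
    le_div_iff₀ (by positivity)]
  calc J * √(1 + X) ≤ J * (1 + √X) := by gcongr
    _ = J + J * √X := by ring
    _ ≤ W * B / κ + W * B + 3 * B := by linarith

end EndpointStationaryPhase

section Distance

variable {r₁ r₂ : ℝ}

lemma dS_sq (hr₁ : 0 ≤ r₁) (hr₂ : 0 ≤ r₂) (s : ℝ) :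
    dS r₁ r₂ s ^ 2 = r₁ ^ 2 + r₂ ^ 2 + 2 * r₁ * r₂ * cosh s :=
  sq_sqrt (by have := cosh_pos s; positivity)

lemma add_le_dS (hr₁ : 0 ≤ r₁) (hr₂ : 0 ≤ r₂) (s : ℝ) : r₁ + r₂ ≤ dS r₁ r₂ s := by
  apply le_sqrt_of_sq_le
  nlinarith [mul_nonneg hr₁ hr₂, one_le_cosh s]

lemma hasDerivAt_dS {s : ℝ} (h : 0 < dS r₁ r₂ s) :
    HasDerivAt (dS r₁ r₂) (r₁ * r₂ * sinh s * (dS r₁ r₂ s)⁻¹) s := by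
  have h_sqrt := (((hasDerivAt_cosh s).const_mul (2 * r₁ * r₂)).const_add
    (r₁ ^ 2 + r₂ ^ 2)).sqrt (sqrt_pos.1 h).ne'
  refine HasDerivAt.congr_deriv (f := dS r₁ r₂) h_sqrt ?_
  change _ / (2 * dS r₁ r₂ s) = _
  field_simp

lemma abs_deriv_dS_le (hr₁ : 0 ≤ r₁) (hr₂ : 0 ≤ r₂) {s : ℝ} (hs : 0 ≤ s)
    (h : 0 < dS r₁ r₂ s) : |r₁ * r₂ * sinh s * (dS r₁ r₂ s)⁻¹| ≤ dS r₁ r₂ s := by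
  have hsinh := sinh_nonneg_iff.2 hs
  have hr := mul_nonneg hr₁ hr₂
  rw [abs_of_nonneg (by positivity), ← div_eq_mul_inv, div_le_iff₀ h, ← sq, dS_sq hr₁ hr₂]
  nlinarith [sinh_lt_cosh s, cosh_pos s, sq_nonneg r₁, sq_nonneg r₂]

end Distance

theorem exists_norm_integral_dS_le {M c q B κ : ℝ} {a : ℝ → ℂ}
    (ha : HasSymbolBound M (Ioi 0) a) (hc : 0 < c) (hq : 1 ≤ q) (hκ : 0 < κ) (hB : 0 ≤ B) :
    ∃ K, 0 ≤ K ∧ ∀ μ lam r₁ r₂ : ℝ, 0 ≤ μ → 0 < lam → 0 ≤ r₁ → 0 ≤ r₂ → c ≤ r₁ + r₂ →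
      ∀ g : ℝ → ℂ, IsAmplitude B κ g →
        ‖∫ s in Ioi 0, Complex.exp (Complex.I * ((lam * dS r₁ r₂ s : ℝ) : ℂ)) *
          ((((μ + dS r₁ r₂ s) ^ (-q) : ℝ) : ℂ) * a (lam * dS r₁ r₂ s) * g s)‖ ≤
        K * (1 + lam * r₁ * r₂) ^ (-(1 : ℝ) / 2) := by
  have hM : 0 ≤ M := (norm_nonneg _).trans (ha.norm_le 1 (mem_Ioi.2 one_pos))
  set A : ℝ := 2 * (2 * ((1 + q) * c ^ (1 - q) * M) * B) with hA
  refine ⟨c⁻¹ * A / κ + c⁻¹ * A + 3 * A, by positivity,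
    fun μ lam r₁ r₂ hμ hlam hr₁ hr₂ hr g hg => ?_⟩
  have hd_ge (s : ℝ) : c ≤ dS r₁ r₂ s := hr.trans (add_le_dS hr₁ hr₂ s)
  have hd_pos (s : ℝ) : 0 < dS r₁ r₂ s := hc.trans_le (hd_ge s)
  have h_profile := (hasSymbolBound_mul_rpow hc hq hμ).mul (Ici_subset_Ici.2 hc.le)
    ((ha.comp_mul_left hlam).mono (Ici_subset_Ioi.2 hc))
  have h_amplitude := (h_profile.isAmplitude_comp (fun s _ => hasDerivAt_dS (hd_pos s))
    (fun s _ => hd_ge s) (fun s hs => abs_deriv_dS_le hr₁ hr₂ hs.le (hd_pos s))).mul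
    le_rfl hκ.le hg
  rw [zero_add, ← hA] at h_amplitude
  have h_bound := norm_integral_Ioi_zero_cexp_mul_mul_le_rpow (X := lam * r₁ * r₂)
    (w := fun s => (dS r₁ r₂ s)⁻¹) (by positivity) hκ
    (fun s _ => ((hasDerivAt_dS (hd_pos s)).const_mul lam).congr_deriv (by ring))
    (fun s _ => ((hasDerivAt_dS (hd_pos s)).continuousAt.inv₀
      (hd_pos s).ne').continuousWithinAt)
    (fun s _ => (abs_of_pos (inv_pos.2 (hd_pos s))).trans_le (inv_anti₀ hc (hd_ge s)))
    h_amplitude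
  convert h_bound using 5 with s
  have hd_ne : (dS r₁ r₂ s : ℂ) ≠ 0 := Complex.ofReal_ne_zero.2 (hd_pos s).ne'
  push_cast
  field_simp

lemma norm_mul_cutoff_mul_le {p b Y c x : ℝ} {β : ℝ → ℝ} {J : ℂ} (hp : 0 ≤ p)
    (hβ : ∀ x, |β x| ≤ b) (hβs : Function.support β ⊆ Ici c) (hY : 0 ≤ Y)
    (hJ : c ≤ x → ‖J‖ ≤ Y) : ‖(p : ℂ) * (β x : ℂ) * J‖ ≤ p * b * Y := by
  have hb : 0 ≤ b := (abs_nonneg _).trans (hβ x)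
  by_cases hx : β x = 0
  · simpa [hx] using by positivity
  · rw [norm_mul, norm_mul, Complex.norm_real, Complex.norm_real, norm_of_nonneg hp]
    gcongr
    · exact hβ x
    · exact hJ (hβs hx)

theorem stmt8_general {δ : ℝ} (hδ : -(1 / 2) ≤ δ) {a : ℝ → ℂ} {M : ℝ}
    (ha : HasSymbolBound M (Ioi 0) a) {β : ℝ → ℝ} {b c : ℝ} (hβ : ∀ x, |β x| ≤ b) (hc : 0 < c)
    (hβs : Function.support β ⊆ Ici c) {α : ℝ} (hα : |α| < 1) (hα0 : α ≠ 0) :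
    ∃ C : ℝ, ∀ (j : ℕ) (r₁ r₂ φ : ℝ), 0 ≤ r₁ → 0 ≤ r₂ →
      ‖Ktil1 δ α a β j r₁ r₂‖ + ‖Ktil2 δ α a β j r₁ r₂ φ‖ ≤
        C * (2 : ℝ) ^ (-(j : ℝ) * (3 / 2 + δ)) *
          (1 + (2 : ℝ) ^ (j : ℝ) * r₁ * r₂) ^ (-(1 : ℝ) / 2) := by
  have hq : 1 ≤ 3 / 2 + δ := by linarith
  obtain ⟨K₁, hK₁, h_bound₁⟩ := exists_norm_integral_dS_le ha hc hq (abs_pos.2 hα0)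
    (by positivity : 0 ≤ 1 + |α|)
  obtain ⟨K₂, hK₂, h_bound₂⟩ := exists_norm_integral_dS_le ha hc hq (sub_pos.2 hα)
    (by norm_num : (0 : ℝ) ≤ 20)
  refine ⟨b * K₁ + b * K₂, fun j r₁ r₂ φ hr₁ hr₂ => ?_⟩
  have hK₁_le : ‖Ktil1 δ α a β j r₁ r₂‖ ≤ _ :=
    norm_mul_cutoff_mul_le (by positivity) hβ hβs (by positivity) fun hr =>
      h_bound₁ _ ((2 : ℝ) ^ (j : ℝ)) r₁ r₂ (by positivity) (by positivity) hr₁ hr₂ hr _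
        (isAmplitude_exp_neg_mul (abs_nonneg α))
  have hK₂_le : ‖Ktil2 δ α a β j r₁ r₂ φ‖ ≤ _ :=
    norm_mul_cutoff_mul_le (by positivity) hβ hβs (by positivity) fun hr =>
      h_bound₂ _ ((2 : ℝ) ^ (j : ℝ)) r₁ r₂ (by positivity) (by positivity) hr₁ hr₂ hr _
        (isAmplitude_exp_neg_sub_mul_sinh_mul_div hα.le (abs_cos_le_one (φ + π)))
  exact (add_le_add hK₁_le hK₂_le).trans_eq (by ring)

theorem stmt8 (δ : ℝ) (hδ : 0 ≤ δ) (a : ℝ → ℂ) (ha : IsSymbol0 a)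
    (β : ℝ → ℝ) (hβ : ContDiff ℝ (⊤ : ℕ∞) β)
    (hβs : Function.support β ⊆ Set.Icc (3 / 8) (4 / 3))
    (α : ℝ) (hα : α ∈ Set.Ioo (-1 : ℝ) 1) (hα0 : α ≠ 0) :
    ∃ C : ℝ, ∀ (j : ℕ), 1 ≤ j → ∀ r₁ r₂ : ℝ, 0 < r₁ → 0 < r₂ →
      ∀ θ₁ ∈ Set.Ico (0 : ℝ) (2 * Real.pi), ∀ θ₂ ∈ Set.Ico (0 : ℝ) (2 * Real.pi),
        ‖Ktil1 δ α a β j r₁ r₂‖ + ‖Ktil2 δ α a β j r₁ r₂ (θ₁ - θ₂)‖ ≤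
          C * (2 : ℝ) ^ (-(j : ℝ) * (3 / 2 + δ)) *
            (1 + (2 : ℝ) ^ (j : ℝ) * r₁ * r₂) ^ (-(1 : ℝ) / 2) := by
  obtain ⟨M, ha⟩ := ha.exists_hasSymbolBound
  obtain ⟨b, hb⟩ := hβ.continuous.bounded_above_of_compact_support
    (HasCompactSupport.of_support_subset_isCompact isCompact_Icc hβs)
  obtain ⟨C, hC⟩ := stmt8_general (δ := δ) (c := 3 / 8) (by linarith) ha hb (by norm_num)
    (hβs.trans Icc_subset_Ici_self) (abs_lt.2 hα) hα0
  exact ⟨C, fun j _ r₁ r₂ hr₁ hr₂ θ₁ _ θ₂ _ => hC j r₁ r₂ (θ₁ - θ₂) hr₁.le hr₂.le⟩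

end
end
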